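/- arXiv:1510.02999 — 7 statements merged into one kernel-verified Lean document; each statement's English description precedes it below -/
import Mathlib

section
/- There exists a constant C > 0 such that: (i) for every u ∈ C_c^∞(ℝ³; ℝ³) with ∇·u = 0 and every x ≠ 0, |x|^{3/2} |ω·u(x)| ≤ C Σ_{|α| ≤ 2} ‖Λ^α u‖_{L²(ℝ³)}; and (ii) for every G ∈ C_c^∞(ℝ³; M₃(ℝ)) with ∂_m G_{mj} = 0 for each j, every x ≠ 0 and every j ∈ {1,2,3}, |x|^{3/2} |ω_i G_{ij}(x)| ≤ C Σ_{|α| ≤ 2} ‖Λ^α G‖_{L²(ℝ³)}; here ω = x/|x| and summation over repeated indices is understood. -/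
open MeasureTheory

noncomputable section

/-- Three-dimensional Euclidean space. -/
abbrev E3 : Type := EuclideanSpace ℝ (Fin 3)

/-- Vector fields on `ℝ³`. -/
abbrev VF3 : Type := E3 → Fin 3 → ℝ

/-- Matrix fields on `ℝ³`. -/
abbrev MF3 : Type := E3 → Fin 3 → Fin 3 → ℝ

/-- The spatial partial derivative `∂_j u` of a scalar function on `ℝ³`. -/
noncomputable def pd (j : Fin 3) (u : E3 → ℝ) (x : E3) : ℝ :=
  fderiv ℝ u x (EuclideanSpace.single j 1)

/-- The rotation generators `V¹ = e₂⊗e₃ − e₃⊗e₂`, `V² = e₃⊗e₁ − e₁⊗e₃`,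
`V³ = e₁⊗e₂ − e₂⊗e₁` (zero-based indexing). -/
def Vmat (i : Fin 3) : Matrix (Fin 3) (Fin 3) ℝ := fun j k =>
  if j = i + 1 ∧ k = i + 2 then 1 else if j = i + 2 ∧ k = i + 1 then -1 else 0

/-- The angular momentum operator `Ω_i` on scalar functions,
`Ω₁ = x₂∂₃ − x₃∂₂` etc. (zero-based, cyclic). -/
noncomputable def angOp (i : Fin 3) (u : E3 → ℝ) (x : E3) : ℝ :=
  x (i + 1) * pd (i + 2) u x - x (i + 2) * pd (i + 1) u x

/-- The time-independent vector fields `Λ = (∂₁, ∂₂, ∂₃, Ω̃₁, Ω̃₂, Ω̃₃, S₀)` acting on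
vector fields, where `Ω̃_i u = Ω_i u + V^i u` and `S₀ = x·∇`. -/
noncomputable def lamV (a : Fin 7) (u : VF3) : VF3 := fun x j =>
  if h : (a : ℕ) < 3 then pd ⟨(a : ℕ), h⟩ (fun y => u y j) x
  else if h2 : (a : ℕ) < 6 then
    angOp ⟨(a : ℕ) - 3, by omega⟩ (fun y => u y j) x
      + ∑ k, Vmat ⟨(a : ℕ) - 3, by omega⟩ j k * u x k
  else ∑ k, x k * pd k (fun y => u y j) x

/-- The time-independent vector fields `Λ = (∂₁, ∂₂, ∂₃, Ω̃₁, Ω̃₂, Ω̃₃, S₀)` acting on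
matrix fields, where `Ω̃_i G = Ω_i G + [V^i, G]` and `S₀ = x·∇`. -/
noncomputable def lamM (a : Fin 7) (G : MF3) : MF3 := fun x j k =>
  if h : (a : ℕ) < 3 then pd ⟨(a : ℕ), h⟩ (fun y => G y j k) x
  else if h2 : (a : ℕ) < 6 then
    angOp ⟨(a : ℕ) - 3, by omega⟩ (fun y => G y j k) x
      + ∑ l, (Vmat ⟨(a : ℕ) - 3, by omega⟩ j l * G x l k
        - G x j l * Vmat ⟨(a : ℕ) - 3, by omega⟩ l k)
  else ∑ l, x l * pd l (fun y => G y j k) x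

/-- The `L²(ℝ³)` norm of a vector field. -/
noncomputable def l2V (u : VF3) : ℝ := (∫ x, ∑ j, (u x j) ^ 2) ^ ((1 : ℝ) / 2)

/-- The `L²(ℝ³)` norm of a matrix field. -/
noncomputable def l2M (G : MF3) : ℝ := (∫ x, ∑ j, ∑ k, (G x j k) ^ 2) ^ ((1 : ℝ) / 2)

/-- `Σ_{|α| ≤ 2} ‖Λ^α u‖_{L²}` for a vector field. -/
noncomputable def sum2V (u : VF3) : ℝ :=
  l2V u + (∑ a : Fin 7, l2V (lamV a u)) + ∑ a : Fin 7, ∑ b : Fin 7, l2V (lamV a (lamV b u))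

/-- `Σ_{|α| ≤ 2} ‖Λ^α G‖_{L²}` for a matrix field. -/
noncomputable def sum2M (G : MF3) : ℝ :=
  l2M G + (∑ a : Fin 7, l2M (lamM a G)) + ∑ a : Fin 7, ∑ b : Fin 7, l2M (lamM a (lamM b G))


lemma one_dim (g g' g'' : ℝ → ℝ) (h1 : ∀ s, HasDerivAt g (g' s) s) (h2 : ∀ s, HasDerivAt g' (g'' s) s)
    (hc : Continuous g'') :
    g 0 ^ 2 ≤ 200 * ∫ s in (0:ℝ)..(1/2), s ^ 2 * (g s ^ 2 + g' s ^ 2 + g'' s ^ 2) := by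
  have cg : Continuous g := continuous_iff_continuousAt.2 fun s => (h1 s).continuousAt
  have cg' : Continuous g' := continuous_iff_continuousAt.2 fun s => (h2 s).continuousAt
  set h : ℝ → ℝ := fun s => (1 - 2*s)^2 * g'' s - 8 * (1 - 2*s) * g' s + 8 * g s with hh
  have ch : Continuous h := by fun_prop
  have e1 : ∫ s in (0:ℝ)..(1/2), s * h s = g 0 := by
    have hd : ∀ s ∈ Set.uIcc (0:ℝ) (1/2), HasDerivAt
        (fun s => s * ((1 - 2*s)^2 * g' s - 4 * (1-2*s) * g s) - (1-2*s)^2 * g s) (s * h s) s := by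
      intro s _
      have hp : HasDerivAt (fun s : ℝ => 1 - 2 * s) (-2) s := by
        simpa using ((hasDerivAt_id s).const_mul 2).const_sub 1
      have hp2 := hp.pow 2
      have := ((hasDerivAt_id s).mul ((hp2.mul (h2 s)).sub ((hp.const_mul 4).mul (h1 s)))).sub
        (hp2.mul (h1 s))
      refine this.congr_deriv ?_
      simp only [hh, Pi.pow_apply, Pi.sub_apply, Pi.mul_apply, id]
      push_cast
      ring
    rw [intervalIntegral.integral_eq_sub_of_hasDerivAt hd
      ((continuous_id.mul ch).intervalIntegrable _ _)]
    norm_num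
  have e2 : 0 ≤ ∫ s in (0:ℝ)..(1/2), (s * h s - g 0)^2 :=
    intervalIntegral.integral_nonneg (by norm_num) fun s _ => sq_nonneg _
  have e3 : ∫ s in (0:ℝ)..(1/2), (s * h s - g 0)^2 =
      (∫ s in (0:ℝ)..(1/2), (s * h s)^2) - 2 * g 0 * (∫ s in (0:ℝ)..(1/2), s * h s) + g 0 ^ 2 / 2 := by
    have : (fun s => (s * h s - g 0)^2) = fun s => ((s * h s)^2 - 2 * g 0 * (s * h s)) + g 0 ^2 := by
      ext s; ring
    rw [this, intervalIntegral.integral_add, intervalIntegral.integral_sub,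
      intervalIntegral.integral_const_mul]
    · simp; ring
    all_goals exact Continuous.intervalIntegrable (by fun_prop) _ _
  have e4 : ∫ s in (0:ℝ)..(1/2), (s * h s)^2 ≤
      ∫ s in (0:ℝ)..(1/2), 200 * (s ^ 2 * (g s ^ 2 + g' s ^ 2 + g'' s ^ 2)) := by
    apply intervalIntegral.integral_mono_on (by norm_num)
      (Continuous.intervalIntegrable (by fun_prop) _ _)
      (Continuous.intervalIntegrable (by fun_prop) _ _)
    intro s hs
    have h0 : 0 ≤ 1 - 2 * s := by linarith [hs.2]
    have h1' : 1 - 2 * s ≤ 1 := by linarith [hs.1]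
    set t := 1 - 2 * s
    have t2 : t^2 ≤ 1 := by nlinarith
    have t4 : (t^2)^2 ≤ 1 := by nlinarith [sq_nonneg t]
    have : h s ^ 2 ≤ 200 * (g s ^ 2 + g' s ^ 2 + g'' s ^ 2) := by
      have a1 : h s ^ 2 ≤ 3 * ((t^2 * g'' s)^2 + (8 * t * g' s)^2 + (8 * g s)^2) := by
        simp only [hh]
        nlinarith [sq_nonneg (t^2 * g'' s + 8 * t * g' s), sq_nonneg (t^2 * g'' s - 8 * g s),
          sq_nonneg (8 * t * g' s + 8 * g s)]
      have a2 : (t^2 * g'' s)^2 ≤ g'' s ^ 2 := by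
        rw [mul_pow]; nlinarith [sq_nonneg (g'' s)]
      have a3 : (8 * t * g' s)^2 ≤ 64 * g' s ^ 2 := by
        have := mul_le_mul_of_nonneg_right t2 (sq_nonneg (g' s))
        nlinarith
      nlinarith [sq_nonneg (g s), sq_nonneg (g' s), sq_nonneg (g'' s)]
    rw [mul_pow]
    nlinarith [mul_le_mul_of_nonneg_left this (sq_nonneg s)]
  rw [intervalIntegral.integral_const_mul] at e4
  rw [e3, e1] at e2
  nlinarith [sq_nonneg (g 0)]


lemma polar_bound (Q : E3 → ℝ) (hi : Integrable Q) (c : ℝ)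
    (h : ∀ w : E3, ‖w‖ = 1 → c ≤ ∫ s in Set.Ioi (0:ℝ), s ^ 2 * Q (s • w)) :
    (volume : Measure E3).toSphere.real Set.univ * c ≤ ∫ z, Q z := by
  have mp := (volume : Measure E3).measurePreserving_homeomorphUnitSphereProd
  have hfr : Module.finrank ℝ E3 - 1 = 2 := by simp
  rw [hfr] at mp
  let F : Metric.sphere (0:E3) 1 × Set.Ioi (0:ℝ) → ℝ := fun p => Q (p.2.1 • p.1.1)
  have hF : ∀ x : ({0}ᶜ : Set E3), F (homeomorphUnitSphereProd E3 x) = Q x := by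
    intro x
    have hx : ‖(x:E3)‖ ≠ 0 := norm_ne_zero_iff.2 x.2
    simp [F, smul_smul, hx]
  have e1 : ∫ z, Q z = ∫ p, F p ∂((volume : Measure E3).toSphere.prod (.volumeIoiPow 2)) := by
    rw [← mp.integral_comp (Homeomorph.measurableEmbedding _)]
    simp only [hF]
    rw [integral_subtype_comap (measurableSet_singleton _).compl Q, restrict_compl_singleton]
  have hFi : Integrable F ((volume : Measure E3).toSphere.prod (.volumeIoiPow 2)) := by
    rw [← mp.integrable_comp_emb (Homeomorph.measurableEmbedding _)]
    have : F ∘ homeomorphUnitSphereProd E3 = Q ∘ Subtype.val := funext hF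
    rw [this, ← integrableOn_iff_comap_subtypeVal (measurableSet_singleton _).compl]
    exact hi.integrableOn
  rw [e1, integral_prod _ hFi]
  have e2 : ∀ w : Metric.sphere (0:E3) 1, c ≤ ∫ s, F (w, s) ∂(Measure.volumeIoiPow 2) := by
    intro w
    refine (h w.1 (by simp)).trans_eq ?_
    simp only [Measure.volumeIoiPow, F]
    rw [integral_withDensity_eq_integral_toReal_smul (by fun_prop) (by simp),
      integral_subtype_comap measurableSet_Ioi
        (fun a : ℝ => (ENNReal.ofReal (a ^ 2)).toReal • Q (a • w.1))]
    refine setIntegral_congr_fun measurableSet_Ioi fun s hs => ?_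
    simp [ENNReal.toReal_ofReal, sq_nonneg]
  calc _ = ∫ w : Metric.sphere (0:E3) 1, c ∂((volume : Measure E3).toSphere) := by simp
    _ ≤ _ := integral_mono (integrable_const _) hFi.integral_prod_left e2

lemma sigma_pos : 0 < (volume : Measure E3).toSphere.real Set.univ := by
  rw [Measure.toSphere_real_apply_univ]
  have : 0 < (volume : Measure E3).real (Metric.ball 0 1) :=
    ENNReal.toReal_pos (Metric.measure_ball_pos _ _ one_pos).ne' measure_ball_lt_top.ne
  simp only [finrank_euclideanSpace, Fintype.card_fin]
  positivity

lemma polar_bound2 (Q : E3 → ℝ) (hq : Continuous Q) (hs : HasCompactSupport Q) (c R : ℝ) (hR : 0 < R)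
    (x₀ : E3)
    (h : ∀ w : E3, ‖w‖ = 1 → c ≤ ∫ s in Set.Ioi (0:ℝ), s ^ 2 * Q (x₀ + s • (R • w))) :
    (volume : Measure E3).toSphere.real Set.univ * c * R ^ 3 ≤ ∫ z, Q z := by
  have hi : Integrable Q := hq.integrable_of_hasCompactSupport hs
  have hi1 : Integrable (fun z => Q (x₀ + z)) := hi.comp_add_left x₀
  have hi2 : Integrable (fun z => Q (x₀ + R • z)) := hi1.comp_smul hR.ne'
  have := polar_bound _ hi2 c (by
    intro w hw
    refine (h w hw).trans_eq ?_
    simp only [smul_comm R])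
  rw [Measure.integral_comp_smul volume (fun z => Q (x₀ + z)) R, integral_add_left_eq_self Q x₀,
    abs_of_pos (by positivity)] at this
  simp only [finrank_euclideanSpace, Fintype.card_fin, smul_eq_mul] at this
  calc _ ≤ ((R ^ 3)⁻¹ * ∫ z, Q z) * R ^ 3 := by gcongr
    _ = _ := by field_simp


/-- The cross-product field `y ↦ e_i × y`. -/
noncomputable def crossA (i : Fin 3) : E3 →L[ℝ] E3 :=
  (EuclideanSpace.proj (𝕜 := ℝ) (i + 1)).smulRight (EuclideanSpace.single (i + 2) (1 : ℝ))
    - (EuclideanSpace.proj (𝕜 := ℝ) (i + 2)).smulRight (EuclideanSpace.single (i + 1) (1 : ℝ))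

/-- The four linear fields generating rotations and scaling. -/
noncomputable def fldA : Fin 4 → E3 →L[ℝ] E3 :=
  ![crossA 0, crossA 1, crossA 2, ContinuousLinearMap.id ℝ E3]

/-- Coefficients of a vector in the frame of `fldA`. -/
noncomputable def cfA (y v : E3) : Fin 4 → ℝ :=
  ![y 1 * v 2 - y 2 * v 1, y 2 * v 0 - y 0 * v 2, y 0 * v 1 - y 1 * v 0,
    y 0 * v 0 + y 1 * v 1 + y 2 * v 2]

lemma nsq (y : E3) : ‖y‖ ^ 2 = y 0 ^ 2 + y 1 ^ 2 + y 2 ^ 2 := by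
  rw [EuclideanSpace.real_norm_sq_eq, Fin.sum_univ_three]

lemma frame (y v : E3) : ‖y‖ ^ 2 • v = ∑ a, cfA y v a • fldA a y := by
  ext k
  rw [nsq]
  fin_cases k <;>
  simp [Fin.sum_univ_four, cfA, fldA, crossA] <;> ring

lemma cfA_le (y v : E3) (a : Fin 4) : |cfA y v a| ≤ ‖y‖ * ‖v‖ := by
  apply abs_le_of_sq_le_sq _ (by positivity)
  rw [mul_pow, nsq, nsq]
  fin_cases a <;> simp [cfA] <;>
  nlinarith [sq_nonneg (y 1 * v 2 - y 2 * v 1), sq_nonneg (y 2 * v 0 - y 0 * v 2),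
    sq_nonneg (y 0 * v 1 - y 1 * v 0), sq_nonneg (y 0 * v 0 + y 1 * v 1 + y 2 * v 2)]

lemma fldA_le (y : E3) (a : Fin 4) : ‖fldA a y‖ ≤ ‖y‖ := by
  apply le_of_sq_le_sq _ (by positivity)
  rw [nsq, nsq]
  fin_cases a <;> simp [fldA, crossA] <;> nlinarith [sq_nonneg (y 0), sq_nonneg (y 1), sq_nonneg (y 2)]

section generic

variable {F : Type*} [NormedAddCommGroup F] [NormedSpace ℝ F]

lemma D_le (D : E3 →L[ℝ] F) (y : E3) (hy : y ≠ 0) (M : ℝ) (h : ∀ a, ‖D (fldA a y)‖ ≤ M) (v : E3) :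
    ‖y‖ * ‖D v‖ ≤ 4 * M * ‖v‖ := by
  have hy' : 0 < ‖y‖ := norm_pos_iff.2 hy
  have h1 : ‖y‖ ^ 2 * ‖D v‖ ≤ ∑ a : Fin 4, ‖y‖ * ‖v‖ * M := by
    have : ‖y‖ ^ 2 * ‖D v‖ = ‖D (‖y‖ ^ 2 • v)‖ := by
      rw [map_smul, norm_smul]; simp
    rw [this, frame, map_sum]
    refine (norm_sum_le _ _).trans (Finset.sum_le_sum fun a _ => ?_)
    rw [map_smul, norm_smul, Real.norm_eq_abs]
    exact mul_le_mul (cfA_le _ _ _) (h a) (norm_nonneg _) (by positivity)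
  simp at h1
  have : ‖y‖ * (‖y‖ * ‖D v‖) ≤ ‖y‖ * (4 * M * ‖v‖) := by nlinarith
  exact le_of_mul_le_mul_left this (norm_pos_iff.2 hy)

/-- Generic operator `u ↦ Du[Ay] + V u`. -/
noncomputable def genL (V : Fin 4 → F →L[ℝ] F) (a : Fin 4) (u : E3 → F) : E3 → F :=
  fun y => fderiv ℝ u y (fldA a y) + V a (u y)

lemma genL_smooth (V : Fin 4 → F →L[ℝ] F) (a : Fin 4) (u : E3 → F) (hu : ContDiff ℝ (⊤ : ℕ∞) u) :
    ContDiff ℝ (⊤ : ℕ∞) (genL V a u) := by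
  have h1 : ContDiff ℝ (⊤ : ℕ∞) (fderiv ℝ u) := hu.fderiv_right (by simp)
  exact (h1.clm_apply (fldA a).contDiff).add ((V a).contDiff.comp hu)

lemma genL_supp (V : Fin 4 → F →L[ℝ] F) (a : Fin 4) (u : E3 → F) (hu : HasCompactSupport u) :
    HasCompactSupport (genL V a u) := by
  have h1 : HasCompactSupport (fderiv ℝ u) := hu.fderiv ℝ
  refine HasCompactSupport.add ?_ ?_
  · exact h1.mono (fun y hy => by
      contrapose! hy
      simp at hy ⊢
      simp [hy])
  · exact hu.comp_left (map_zero _)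

lemma genL_two (V : Fin 4 → F →L[ℝ] F) (a b : Fin 4) (u : E3 → F) (hu : ContDiff ℝ (⊤ : ℕ∞) u)
    (y : E3) : genL V a (genL V b u) y =
      fderiv ℝ (fderiv ℝ u) y (fldA a y) (fldA b y) + fderiv ℝ u y (fldA b (fldA a y))
      + V b (fderiv ℝ u y (fldA a y)) + V a (genL V b u y) := by
  have h1 : ContDiff ℝ (⊤ : ℕ∞) (fderiv ℝ u) := hu.fderiv_right (by simp)
  have d1 : HasFDerivAt (fderiv ℝ u) (fderiv ℝ (fderiv ℝ u) y) y :=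
    (h1.differentiable (by simp) y).hasFDerivAt
  have d0 : HasFDerivAt u (fderiv ℝ u y) y := (hu.differentiable (by simp) y).hasFDerivAt
  have := (d1.clm_apply (fldA b).hasFDerivAt).add ((V b).hasFDerivAt.comp y d0)
  have e : fderiv ℝ (genL V b u) y = _ := HasFDerivAt.fderiv this
  conv_lhs => rw [genL]
  rw [e]
  simp
  abel

/-- The pointwise size of all the derivatives. -/
noncomputable def sizeP (V : Fin 4 → F →L[ℝ] F) (u : E3 → F) (y : E3) : ℝ :=
  ‖u y‖ + ∑ a, ‖genL V a u y‖ + ∑ a, ∑ b, ‖genL V a (genL V b u) y‖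

lemma sizeP_0 (V : Fin 4 → F →L[ℝ] F) (u : E3 → F) (y : E3) : ‖u y‖ ≤ sizeP V u y := by
  unfold sizeP
  have : 0 ≤ ∑ a, ‖genL V a u y‖ := by positivity
  have : 0 ≤ ∑ a, ∑ b, ‖genL V a (genL V b u) y‖ := by positivity
  linarith

lemma sizeP_1 (V : Fin 4 → F →L[ℝ] F) (u : E3 → F) (y : E3) (a) : ‖genL V a u y‖ ≤ sizeP V u y := by
  unfold sizeP
  have : ‖genL V a u y‖ ≤ ∑ a, ‖genL V a u y‖ :=
    Finset.single_le_sum (f := fun a => ‖genL V a u y‖) (fun _ _ => norm_nonneg _) (Finset.mem_univ a)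
  have : 0 ≤ ∑ a, ∑ b, ‖genL V a (genL V b u) y‖ := by positivity
  linarith [norm_nonneg (u y)]

lemma sizeP_2 (V : Fin 4 → F →L[ℝ] F) (u : E3 → F) (y : E3) (a b) :
    ‖genL V a (genL V b u) y‖ ≤ sizeP V u y := by
  unfold sizeP
  have : 0 ≤ ∑ a, ‖genL V a u y‖ := by positivity
  have h1 : ‖genL V a (genL V b u) y‖ ≤ ∑ b, ‖genL V a (genL V b u) y‖ :=
    Finset.single_le_sum (f := fun b => ‖genL V a (genL V b u) y‖) (fun _ _ => norm_nonneg _)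
      (Finset.mem_univ b)
  have h2 : ∑ b, ‖genL V a (genL V b u) y‖ ≤ ∑ a, ∑ b, ‖genL V a (genL V b u) y‖ :=
    Finset.single_le_sum (f := fun a => ∑ b, ‖genL V a (genL V b u) y‖)
      (fun _ _ => by positivity) (Finset.mem_univ a)
  linarith [norm_nonneg (u y)]

lemma D1_bound (V : Fin 4 → F →L[ℝ] F) (K : ℝ) (hV : ∀ a w, ‖V a w‖ ≤ K * ‖w‖) (hK : 0 ≤ K)
    (u : E3 → F) (y : E3) (a : Fin 4) :
    ‖fderiv ℝ u y (fldA a y)‖ ≤ (1 + K) * sizeP V u y := by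
  have : fderiv ℝ u y (fldA a y) = genL V a u y - V a (u y) := by simp [genL]
  rw [this]
  have h1 := norm_sub_le (genL V a u y) (V a (u y))
  have h2 := mul_le_mul_of_nonneg_left (sizeP_0 V u y) hK
  linarith [sizeP_1 V u y a, hV a (u y)]

lemma D2_bound (V : Fin 4 → F →L[ℝ] F) (K : ℝ) (hV : ∀ a w, ‖V a w‖ ≤ K * ‖w‖) (hK : 0 ≤ K)
    (u : E3 → F) (hu : ContDiff ℝ (⊤ : ℕ∞) u) (y : E3) (hy : y ≠ 0) (a b : Fin 4) :
    ‖fderiv ℝ (fderiv ℝ u) y (fldA a y) (fldA b y)‖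
      ≤ (1 + 4 * (1 + K) + K * (1 + K) + K) * sizeP V u y := by
  have hy' : 0 < ‖y‖ := norm_pos_iff.2 hy
  have hP : 0 ≤ sizeP V u y := (norm_nonneg _).trans (sizeP_0 V u y)
  have e : fderiv ℝ (fderiv ℝ u) y (fldA a y) (fldA b y) = genL V a (genL V b u) y
      - fderiv ℝ u y (fldA b (fldA a y)) - V b (fderiv ℝ u y (fldA a y)) - V a (genL V b u y) := by
    rw [genL_two V a b u hu y]; abel
  rw [e]
  have t1 : ‖fderiv ℝ u y (fldA b (fldA a y))‖ ≤ 4 * (1 + K) * sizeP V u y := by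
    have := D_le (fderiv ℝ u y) y hy _ (D1_bound V K hV hK u y) (fldA b (fldA a y))
    have h3 : ‖fldA b (fldA a y)‖ ≤ ‖y‖ := (fldA_le _ _).trans (fldA_le _ _)
    have h4 : 4 * ((1 + K) * sizeP V u y) * ‖fldA b (fldA a y)‖ ≤ 4 * ((1 + K) * sizeP V u y) * ‖y‖ := by
      gcongr
    refine le_of_mul_le_mul_left (a := ‖y‖) ?_ hy'
    linarith
  have t2 : ‖V b (fderiv ℝ u y (fldA a y))‖ ≤ K * ((1 + K) * sizeP V u y) :=
    (hV _ _).trans (by gcongr; exact D1_bound V K hV hK u y a)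
  have t3 : ‖V a (genL V b u y)‖ ≤ K * sizeP V u y :=
    (hV _ _).trans (by gcongr; exact sizeP_1 V u y b)
  have := norm_sub_le (genL V a (genL V b u) y
      - fderiv ℝ u y (fldA b (fldA a y)) - V b (fderiv ℝ u y (fldA a y))) (V a (genL V b u y))
  have := norm_sub_le (genL V a (genL V b u) y
      - fderiv ℝ u y (fldA b (fldA a y))) (V b (fderiv ℝ u y (fldA a y)))
  have := norm_sub_le (genL V a (genL V b u) y) (fderiv ℝ u y (fldA b (fldA a y)))
  linarith [sizeP_2 V u y a b]

lemma D2_bound' (V : Fin 4 → F →L[ℝ] F) (K : ℝ) (hV : ∀ a w, ‖V a w‖ ≤ K * ‖w‖) (hK : 0 ≤ K)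
    (u : E3 → F) (hu : ContDiff ℝ (⊤ : ℕ∞) u) (y : E3) (hy : y ≠ 0) (v : E3) (hv : ‖v‖ ≤ 2 * ‖y‖) :
    ‖fderiv ℝ u y v‖ ≤ 8 * (1 + K) * sizeP V u y ∧
    ‖fderiv ℝ (fderiv ℝ u) y v v‖ ≤ 64 * (1 + 4 * (1 + K) + K * (1 + K) + K) * sizeP V u y := by
  have hy' : 0 < ‖y‖ := norm_pos_iff.2 hy
  have hP : 0 ≤ sizeP V u y := (norm_nonneg _).trans (sizeP_0 V u y)
  have key : ∀ (D : E3 →L[ℝ] F) (M : ℝ), 0 ≤ M → (∀ a, ‖D (fldA a y)‖ ≤ M) → ‖D v‖ ≤ 8 * M := by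
    intro D M hM h
    have := D_le D y hy M h v
    have h2 : 4 * M * ‖v‖ ≤ 4 * M * (2 * ‖y‖) := by gcongr
    refine le_of_mul_le_mul_left (a := ‖y‖) ?_ hy'
    linarith
  refine ⟨?_, ?_⟩
  · have := key _ _ (by positivity) (D1_bound V K hV hK u y)
    linarith
  · set M := (1 + 4 * (1 + K) + K * (1 + K) + K) * sizeP V u y with hM
    have hM0 : 0 ≤ M := by positivity
    have h1 : ∀ a, ‖fderiv ℝ (fderiv ℝ u) y (fldA a y) v‖ ≤ 8 * M := fun a =>
      key _ _ hM0 (fun b => D2_bound V K hV hK u hu y hy a b)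
    have := key ((fderiv ℝ (fderiv ℝ u) y).flip v) (8 * M) (by positivity) (by simpa using h1)
    simp at this
    linarith


/-- Sum of squares of all derivatives. -/
noncomputable def sizeQ (V : Fin 4 → F →L[ℝ] F) (u : E3 → F) (y : E3) : ℝ :=
  ‖u y‖ ^ 2 + ∑ a, ‖genL V a u y‖ ^ 2 + ∑ a, ∑ b, ‖genL V a (genL V b u) y‖ ^ 2

lemma sizeP_sq (V : Fin 4 → F →L[ℝ] F) (u : E3 → F) (y : E3) :
    sizeP V u y ^ 2 ≤ 48 * sizeQ V u y := by
  unfold sizeP sizeQ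
  have h1 : (∑ a, ‖genL V a u y‖) ^ 2 ≤ 4 * ∑ a, ‖genL V a u y‖ ^ 2 := by
    simpa using sq_sum_le_card_mul_sum_sq (s := Finset.univ) (f := fun a => ‖genL V a u y‖)
  have h2 : (∑ a, ∑ b, ‖genL V a (genL V b u) y‖) ^ 2
      ≤ 16 * ∑ a, ∑ b, ‖genL V a (genL V b u) y‖ ^ 2 := by
    have h3 : (∑ a, ∑ b, ‖genL V a (genL V b u) y‖) ^ 2
      ≤ 4 * ∑ a, (∑ b, ‖genL V a (genL V b u) y‖) ^ 2 := by
      simpa using sq_sum_le_card_mul_sum_sq (s := Finset.univ)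
        (f := fun a => ∑ b, ‖genL V a (genL V b u) y‖)
    have h4 : ∑ a, (∑ b, ‖genL V a (genL V b u) y‖) ^ 2
        ≤ ∑ a, 4 * ∑ b, ‖genL V a (genL V b u) y‖ ^ 2 := by
      refine Finset.sum_le_sum fun a _ => ?_
      simpa using sq_sum_le_card_mul_sum_sq (s := Finset.univ)
        (f := fun b => ‖genL V a (genL V b u) y‖)
    rw [← Finset.mul_sum] at h4
    linarith
  have h5 : 0 ≤ ∑ a, ‖genL V a u y‖ ^ 2 := by positivity
  set s := ∑ a, ‖genL V a u y‖
  set t := ∑ a, ∑ b, ‖genL V a (genL V b u) y‖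
  nlinarith [sq_nonneg (‖u y‖ - s), sq_nonneg (‖u y‖ - t), sq_nonneg (s - t), sq_nonneg (‖u y‖)]

lemma sizeQ_cont (V : Fin 4 → F →L[ℝ] F) (u : E3 → F) (hu : ContDiff ℝ (⊤ : ℕ∞) u) :
    Continuous (sizeQ V u) := by
  have h1 : ∀ a, Continuous (genL V a u) := fun a => (genL_smooth V a u hu).continuous
  have h2 : ∀ a b, Continuous (genL V a (genL V b u)) := fun a b =>
    (genL_smooth V a _ (genL_smooth V b u hu)).continuous
  have h0 := hu.continuous
  unfold sizeQ
  fun_prop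

lemma sizeQ_supp (V : Fin 4 → F →L[ℝ] F) (u : E3 → F) (hu : HasCompactSupport u) :
    HasCompactSupport (sizeQ V u) := by
  have h1 : ∀ a, HasCompactSupport (genL V a u) := fun a => genL_supp V a u hu
  have h2 : ∀ a b, HasCompactSupport (genL V a (genL V b u)) := fun a b =>
    genL_supp V a _ (h1 b)
  refine HasCompactSupport.of_support_subset_isCompact
    (K := tsupport u ∪ (⋃ a, tsupport (genL V a u)) ∪ ⋃ a, ⋃ b, tsupport (genL V a (genL V b u))) ?_ ?_
  · refine (hu.isCompact.union (isCompact_iUnion fun a => (h1 a).isCompact)).union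
      (isCompact_iUnion fun a => isCompact_iUnion fun b => (h2 a b).isCompact)
  · intro y hy
    contrapose! hy
    simp only [Set.mem_union, Set.mem_iUnion, not_or, not_exists] at hy
    have a0 := image_eq_zero_of_notMem_tsupport hy.1.1
    have a1 := fun a => image_eq_zero_of_notMem_tsupport (hy.1.2 a)
    have a2 := fun a b => image_eq_zero_of_notMem_tsupport (hy.2 a b)
    simp [sizeQ, a0, a1, a2]

lemma generic_bound (K : ℝ) (hK : 0 ≤ K) : ∃ C > 0, ∀ (V : Fin 4 → F →L[ℝ] F),
    (∀ a w, ‖V a w‖ ≤ K * ‖w‖) → ∀ (u : E3 → F), ContDiff ℝ (⊤ : ℕ∞) u → HasCompactSupport u →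
    ∀ φ : F →L[ℝ] ℝ, (∀ w, |φ w| ≤ ‖w‖) → ∀ x : E3, x ≠ 0 →
    ‖x‖ ^ 3 * (φ (u x)) ^ 2 ≤ C * ∫ y, sizeQ V u y := by
  set C1 := 8 * (1 + K) with hC1
  set C2 := 64 * (1 + 4 * (1 + K) + K * (1 + K) + K) with hC2
  set C3 := 200 * ((1 + C1 ^ 2 + C2 ^ 2) * 48) with hC3
  have hC3p : 0 < C3 := by positivity
  have hσ := sigma_pos
  set σ := (volume : Measure E3).toSphere.real Set.univ
  refine ⟨C3 / σ, by positivity, ?_⟩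
  intro V hV u hu hs φ hφ x hx
  have hR : 0 < ‖x‖ := norm_pos_iff.2 hx
  have cQ := sizeQ_cont V u hu
  have sQ := sizeQ_supp V u hs
  have nQ : ∀ y, 0 ≤ sizeQ V u y := fun y => by unfold sizeQ; positivity
  have hd1 : ContDiff ℝ (⊤ : ℕ∞) (fderiv ℝ u) := hu.fderiv_right (by simp)
  have hd2 : ContDiff ℝ (⊤ : ℕ∞) (fderiv ℝ (fderiv ℝ u)) := hd1.fderiv_right (by simp)
  have main := polar_bound2 (sizeQ V u) cQ sQ (φ (u x) ^ 2 / C3) ‖x‖ hR x (by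
    intro w hw
    set v := ‖x‖ • w with hv
    have nv : ‖v‖ = ‖x‖ := by rw [hv, norm_smul, hw]; simp
    have v0 : v ≠ 0 := norm_ne_zero_iff.1 (by rw [nv]; exact hR.ne')
    have hl : ∀ s : ℝ, HasDerivAt (fun s : ℝ => x + s • v) v s := fun s => by
      simpa using ((hasDerivAt_id s).smul_const v).const_add x
    have g1 : ∀ s, HasDerivAt (fun s : ℝ => φ (u (x + s • v))) (φ (fderiv ℝ u (x + s • v) v)) s := by
      intro s
      have d := ((hu.differentiable (by simp) (x + s • v)).hasFDerivAt).comp_hasDerivAt s (hl s)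
      exact φ.hasFDerivAt.comp_hasDerivAt s d
    have g2 : ∀ s, HasDerivAt (fun s : ℝ => φ (fderiv ℝ u (x + s • v) v))
        (φ (fderiv ℝ (fderiv ℝ u) (x + s • v) v v)) s := by
      intro s
      have d := ((hd1.differentiable (by simp) (x + s • v)).hasFDerivAt).comp_hasDerivAt s (hl s)
      have d' := d.clm_apply (hasDerivAt_const s v)
      refine (φ.hasFDerivAt.comp_hasDerivAt s d').congr_deriv ?_
      simp
    have cont2 : Continuous (fun s : ℝ => φ (fderiv ℝ (fderiv ℝ u) (x + s • v) v v)) := by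
      have := hd2.continuous
      fun_prop
    have cont1 : Continuous (fun s : ℝ => φ (fderiv ℝ u (x + s • v) v)) := by
      have := hd1.continuous
      fun_prop
    have cont0 : Continuous (fun s : ℝ => φ (u (x + s • v))) := by
      have := hu.continuous
      fun_prop
    have o := one_dim _ _ _ g1 g2 cont2
    simp only [zero_smul, add_zero] at o
    have cq : Continuous (fun s : ℝ => s ^ 2 * sizeQ V u (x + s • v)) := by fun_prop
    have hemb : Topology.IsClosedEmbedding (fun s : ℝ => x + s • v) :=
      (Homeomorph.addLeft x).isClosedEmbedding.comp (isClosedEmbedding_smul_left v0)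
    have csq : HasCompactSupport (fun s : ℝ => s ^ 2 * sizeQ V u (x + s • v)) :=
      (sQ.comp_isClosedEmbedding hemb).mul_left
    have iq : Integrable (fun s : ℝ => s ^ 2 * sizeQ V u (x + s • v)) :=
      cq.integrable_of_hasCompactSupport csq
    have o2 : ∫ s in (0:ℝ)..(1/2), s ^ 2 * (φ (u (x + s • v)) ^ 2 + φ (fderiv ℝ u (x + s • v) v) ^ 2
        + φ (fderiv ℝ (fderiv ℝ u) (x + s • v) v v) ^ 2)
        ≤ ∫ s in (0:ℝ)..(1/2), ((1 + C1 ^ 2 + C2 ^ 2) * 48) * (s ^ 2 * sizeQ V u (x + s • v)) := by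
      apply intervalIntegral.integral_mono_on (by norm_num)
        (Continuous.intervalIntegrable ((continuous_id.pow 2).mul
          (((cont0.pow 2).add (cont1.pow 2)).add (cont2.pow 2))) _ _)
        (Continuous.intervalIntegrable (by fun_prop) _ _)
      intro s hs
      set y := x + s • v with hy
      have hyn : ‖x‖ ≤ 2 * ‖y‖ := by
        have : ‖x‖ ≤ ‖y‖ + ‖s • v‖ := by
          have := norm_sub_le y (s • v)
          simpa [hy] using this
        rw [norm_smul, nv, Real.norm_eq_abs, abs_of_nonneg hs.1] at this
        have := mul_le_mul_of_nonneg_right hs.2 hR.le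
        linarith
      have hy0 : y ≠ 0 := norm_ne_zero_iff.1 (by linarith : 0 < ‖y‖).ne'
      obtain ⟨b1, b2⟩ := D2_bound' V K hV hK u hu y hy0 v (by rw [nv]; exact hyn)
      have b0 := sizeP_0 V u y
      have q0 : φ (u y) ^ 2 ≤ sizeP V u y ^ 2 := by
        rw [← sq_abs]; gcongr; exact (hφ _).trans b0
      have q1 : φ (fderiv ℝ u y v) ^ 2 ≤ (C1 * sizeP V u y) ^ 2 := by
        rw [← sq_abs]; gcongr; exact (hφ _).trans b1
      have q2 : φ (fderiv ℝ (fderiv ℝ u) y v v) ^ 2 ≤ (C2 * sizeP V u y) ^ 2 := by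
        rw [← sq_abs]; gcongr; exact (hφ _).trans b2
      have q3 := mul_le_mul_of_nonneg_left (sizeP_sq V u y)
        (by positivity : 0 ≤ 1 + C1 ^ 2 + C2 ^ 2)
      have : φ (u y) ^ 2 + φ (fderiv ℝ u y v) ^ 2 + φ (fderiv ℝ (fderiv ℝ u) y v v) ^ 2
          ≤ (1 + C1 ^ 2 + C2 ^ 2) * 48 * sizeQ V u y := by nlinarith
      have := mul_le_mul_of_nonneg_left this (sq_nonneg s)
      exact le_trans this (le_of_eq (by ring))
    rw [intervalIntegral.integral_const_mul] at o2
    have o3 : ∫ s in (0:ℝ)..(1/2), s ^ 2 * sizeQ V u (x + s • v)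
        ≤ ∫ s in Set.Ioi (0:ℝ), s ^ 2 * sizeQ V u (x + s • v) := by
      rw [intervalIntegral.integral_of_le (by norm_num)]
      refine setIntegral_mono_set iq.integrableOn
        (Filter.Eventually.of_forall fun s => mul_nonneg (sq_nonneg s) (nQ _))
        (Filter.Eventually.of_forall fun s hs => hs.1)
    rw [div_le_iff₀ hC3p]
    have o4 := mul_le_mul_of_nonneg_left o3 (by positivity : 0 ≤ (1 + C1 ^ 2 + C2 ^ 2) * 48)
    rw [hC3]
    linarith)
  rw [div_mul_eq_mul_div, le_div_iff₀ hσ]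
  have := mul_le_mul_of_nonneg_left main hC3p.le
  refine le_trans (le_of_eq ?_) this
  field_simp
  rfl

/-- Generic `L²` norm built from a quadratic density. -/
noncomputable def l2N (N : F → ℝ) (u : E3 → F) : ℝ := (∫ x, N (u x)) ^ ((1 : ℝ) / 2)

/-- Generic sum of norms. -/
noncomputable def sumN (N : F → ℝ) (V : Fin 4 → F →L[ℝ] F) (u : E3 → F) : ℝ :=
  l2N N u + ∑ a, l2N N (genL V a u) + ∑ a, ∑ b, l2N N (genL V a (genL V b u))

lemma l2N_nonneg (N : F → ℝ) (hN : ∀ w, ‖w‖ ^ 2 ≤ N w) (u : E3 → F) : 0 ≤ l2N N u :=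
  Real.rpow_nonneg (integral_nonneg fun x => (sq_nonneg _).trans (hN _)) _

lemma int_le_l2N (N : F → ℝ) (hc : Continuous N) (h0 : N 0 = 0) (hN : ∀ w, ‖w‖ ^ 2 ≤ N w)
    (u : E3 → F) (hu : ContDiff ℝ (⊤ : ℕ∞) u) (hs : HasCompactSupport u) :
    Integrable (fun x => ‖u x‖ ^ 2) ∧ ∫ x, ‖u x‖ ^ 2 ≤ l2N N u ^ 2 := by
  have hcu := hu.continuous
  have i1 : Integrable (fun x => ‖u x‖ ^ 2) :=
    Continuous.integrable_of_hasCompactSupport (by fun_prop)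
      (hs.comp_left (g := fun w => ‖w‖ ^ 2) (by simp))
  have i2 : Integrable (fun x => N (u x)) :=
    Continuous.integrable_of_hasCompactSupport (by fun_prop) (hs.comp_left h0)
  refine ⟨i1, ?_⟩
  have : l2N N u ^ 2 = ∫ x, N (u x) := by
    rw [l2N, ← Real.sqrt_eq_rpow, Real.sq_sqrt]
    exact integral_nonneg fun x => (sq_nonneg _).trans (hN _)
  rw [this]
  exact integral_mono i1 i2 fun x => hN _

lemma sumsq_le {ι : Type*} [Fintype ι] (f : ι → ℝ) (hf : ∀ i, 0 ≤ f i) :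
    ∑ i, f i ^ 2 ≤ (∑ i, f i) ^ 2 :=
  Finset.sum_sq_le_sq_sum_of_nonneg fun i _ => hf i

lemma int_sizeQ (N : F → ℝ) (hc : Continuous N) (h0 : N 0 = 0) (hN : ∀ w, ‖w‖ ^ 2 ≤ N w)
    (V : Fin 4 → F →L[ℝ] F)
    (u : E3 → F) (hu : ContDiff ℝ (⊤ : ℕ∞) u) (hs : HasCompactSupport u) :
    ∫ y, sizeQ V u y ≤ sumN N V u ^ 2 := by
  have k0 := int_le_l2N N hc h0 hN u hu hs
  have k1 := fun a => int_le_l2N N hc h0 hN _ (genL_smooth V a u hu) (genL_supp V a u hs)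
  have k2 := fun a b => int_le_l2N N hc h0 hN _ (genL_smooth V a _ (genL_smooth V b u hu))
    (genL_supp V a _ (genL_supp V b u hs))
  have i1 : Integrable (fun y => ∑ a, ‖genL V a u y‖ ^ 2) :=
    integrable_finsetSum _ fun a _ => (k1 a).1
  have i2' : ∀ a, Integrable (fun y => ∑ b, ‖genL V a (genL V b u) y‖ ^ 2) := fun a =>
    integrable_finsetSum _ fun b _ => (k2 a b).1
  have i2 : Integrable (fun y => ∑ a, ∑ b, ‖genL V a (genL V b u) y‖ ^ 2) :=
    integrable_finsetSum _ fun a _ => i2' a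
  have e : ∫ y, sizeQ V u y = (∫ y, ‖u y‖ ^ 2) + ∑ a, (∫ y, ‖genL V a u y‖ ^ 2)
      + ∑ a, ∑ b, ∫ y, ‖genL V a (genL V b u) y‖ ^ 2 := by
    unfold sizeQ
    have e1 := integral_add (k0.1.add i1) i2
    have e2 := integral_add k0.1 i1
    simp only [Pi.add_apply] at e1 e2
    rw [e1, e2, integral_finsetSum _ fun a _ => (k1 a).1, integral_finsetSum _ fun a _ => i2' a]
    simp only [integral_finsetSum _ fun b _ => (k2 _ b).1]
  rw [e, sumN]
  have n0 := l2N_nonneg N hN u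
  have n1 := fun a => l2N_nonneg N hN (genL V a u)
  have n2 := fun a b => l2N_nonneg N hN (genL V a (genL V b u))
  have m1 : ∑ a, ∫ y, ‖genL V a u y‖ ^ 2 ≤ (∑ a, l2N N (genL V a u)) ^ 2 :=
    (Finset.sum_le_sum fun a _ => (k1 a).2).trans (sumsq_le _ n1)
  have m2 : ∑ a, ∑ b, ∫ y, ‖genL V a (genL V b u) y‖ ^ 2
      ≤ (∑ a, ∑ b, l2N N (genL V a (genL V b u))) ^ 2 :=
    (Finset.sum_le_sum fun a _ => (Finset.sum_le_sum fun b _ => (k2 a b).2).trans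
      (sumsq_le _ (n2 a))).trans (sumsq_le _ fun a => Finset.sum_nonneg fun b _ => n2 a b)
  have p1 : 0 ≤ ∑ a, l2N N (genL V a u) := Finset.sum_nonneg fun a _ => n1 a
  have p2 : 0 ≤ ∑ a, ∑ b, l2N N (genL V a (genL V b u)) :=
    Finset.sum_nonneg fun a _ => Finset.sum_nonneg fun b _ => n2 a b
  nlinarith [k0.2, mul_nonneg n0 p1, mul_nonneg n0 p2, mul_nonneg p1 p2]

lemma sumN_nonneg (N : F → ℝ) (hN : ∀ w, ‖w‖ ^ 2 ≤ N w) (V : Fin 4 → F →L[ℝ] F) (u : E3 → F) :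
    0 ≤ sumN N V u := by
  have n0 := l2N_nonneg N hN u
  have n1 := fun a => l2N_nonneg N hN (genL V a u)
  have n2 := fun a b => l2N_nonneg N hN (genL V a (genL V b u))
  exact add_nonneg (add_nonneg n0 (Finset.sum_nonneg fun a _ => n1 a))
    (Finset.sum_nonneg fun a _ => Finset.sum_nonneg fun b _ => n2 a b)

lemma final_gen (N : F → ℝ) (hc : Continuous N) (h0 : N 0 = 0) (hN : ∀ w, ‖w‖ ^ 2 ≤ N w)
    (V : Fin 4 → F →L[ℝ] F) : ∃ C > 0, ∀ u : E3 → F, ContDiff ℝ (⊤ : ℕ∞) u → HasCompactSupport u →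
    ∀ φ : F →L[ℝ] ℝ, (∀ w, |φ w| ≤ ‖w‖) → ∀ x : E3, x ≠ 0 →
    ‖x‖ ^ ((3 : ℝ) / 2) * |φ (u x)| ≤ C * sumN N V u := by
  obtain ⟨C, hC, h⟩ := generic_bound (F := F) (∑ a, ‖V a‖) (by positivity)
  refine ⟨Real.sqrt C, Real.sqrt_pos.2 hC, ?_⟩
  intro u hu hs φ hφ x hx
  have hV : ∀ a w, ‖V a w‖ ≤ (∑ a, ‖V a‖) * ‖w‖ := fun a w =>
    ((V a).le_opNorm w).trans (mul_le_mul_of_nonneg_right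
      (Finset.single_le_sum (f := fun a => ‖V a‖) (fun _ _ => norm_nonneg _) (Finset.mem_univ a))
      (norm_nonneg _))
  have k := h V hV u hu hs φ hφ x hx
  have k2 := mul_le_mul_of_nonneg_left (int_sizeQ N hc h0 hN V u hu hs) hC.le
  have p : 0 ≤ sumN N V u := sumN_nonneg N hN V u
  apply le_of_sq_le_sq _ (by positivity)
  rw [mul_pow, mul_pow, Real.sq_sqrt hC.le, sq_abs]
  have : (‖x‖ ^ ((3 : ℝ) / 2)) ^ 2 = ‖x‖ ^ 3 := by
    rw [← Real.rpow_natCast, ← Real.rpow_mul (norm_nonneg _), ← Real.rpow_natCast]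
    norm_num
  rw [this]
  linarith

end generic

/-- The embedding of the four homogeneous fields in the list of seven. -/
def emb4 (a : Fin 4) : Fin 7 := ⟨(a : ℕ) + 3, by omega⟩

lemma sum4_le (f : Fin 7 → ℝ) (hf : ∀ i, 0 ≤ f i) : ∑ a, f (emb4 a) ≤ ∑ a, f a := by
  rw [Fin.sum_univ_four, Fin.sum_univ_seven]
  have e0 : emb4 0 = 3 := rfl
  have e1 : emb4 1 = 4 := rfl
  have e2 : emb4 2 = 5 := rfl
  have e3 : emb4 3 = 6 := rfl
  rw [e0, e1, e2, e3]
  linarith [hf 0, hf 1, hf 2]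

/-- Zeroth order part for vector fields. -/
noncomputable def VV (i : Fin 3) : (Fin 3 → ℝ) →L[ℝ] (Fin 3 → ℝ) :=
  LinearMap.toContinuousLinearMap
    { toFun := fun w j => ∑ k, Vmat i j k * w k
      map_add' := by intro w z; ext j; simp [mul_add, Finset.sum_add_distrib]
      map_smul' := by
        intro c w; ext j; simp [Finset.mul_sum]
        refine Finset.sum_congr rfl fun k _ => by ring }

/-- Zeroth order part for matrix fields. -/
noncomputable def VM (i : Fin 3) : (Fin 3 → Fin 3 → ℝ) →L[ℝ] (Fin 3 → Fin 3 → ℝ) :=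
  LinearMap.toContinuousLinearMap
    { toFun := fun w j k => ∑ l, (Vmat i j l * w l k - w j l * Vmat i l k)
      map_add' := by
        intro w z; ext j k; simp only [Pi.add_apply, ← Finset.sum_add_distrib]
        refine Finset.sum_congr rfl fun k _ => by ring
      map_smul' := by
        intro c w; ext j k; simp only [Pi.smul_apply, smul_eq_mul, Finset.mul_sum, RingHom.id_apply]
        refine Finset.sum_congr rfl fun k _ => by ring }

lemma pdV (u : VF3) (hu : ContDiff ℝ (⊤ : ℕ∞) u) (x : E3) (i j : Fin 3) :
    pd i (fun y => u y j) x = fderiv ℝ u x (EuclideanSpace.single i 1) j := by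
  have h := (hu.differentiable (by simp) x).hasFDerivAt
  have := ((ContinuousLinearMap.proj (R := ℝ) (φ := fun _ : Fin 3 => ℝ) j).hasFDerivAt.comp x h).fderiv
  unfold pd
  have e : (fun y => u y j) = (ContinuousLinearMap.proj (R := ℝ) (φ := fun _ : Fin 3 => ℝ) j) ∘ u := rfl
  rw [e, this]
  rfl

lemma pdM (u : MF3) (hu : ContDiff ℝ (⊤ : ℕ∞) u) (x : E3) (i j k : Fin 3) :
    pd i (fun y => u y j k) x = fderiv ℝ u x (EuclideanSpace.single i 1) j k := by
  have h := (hu.differentiable (by simp) x).hasFDerivAt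
  set P : (Fin 3 → Fin 3 → ℝ) →L[ℝ] ℝ := (ContinuousLinearMap.proj (R := ℝ) (φ := fun _ : Fin 3 => ℝ) k).comp
    (ContinuousLinearMap.proj (R := ℝ) (φ := fun _ : Fin 3 => Fin 3 → ℝ) j) with hP
  have := (P.hasFDerivAt.comp x h).fderiv
  unfold pd
  have e : (fun y => u y j k) = P ∘ u := rfl
  rw [e, this]
  rfl

lemma id_expand (x : E3) : x = ∑ k, x k • EuclideanSpace.single k (1 : ℝ) := by
  ext j
  fin_cases j <;> simp [Fin.sum_univ_three]

lemma lamV_eq (a : Fin 4) (u : VF3) (hu : ContDiff ℝ (⊤ : ℕ∞) u) :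
    lamV (emb4 a) u = genL ![VV 0, VV 1, VV 2, 0] a u := by
  funext x j
  have hid : (∑ k, x k * fderiv ℝ u x (EuclideanSpace.single k 1) j) = fderiv ℝ u x x j := by
    have := congrArg (fun z => fderiv ℝ u x z j) (id_expand x)
    simp only [map_sum, map_smul, Finset.sum_apply, Pi.smul_apply, smul_eq_mul] at this
    exact this.symm
  fin_cases a
  · simp [lamV, emb4, genL, fldA, angOp, pdV u hu, crossA, VV]
  · simp [lamV, emb4, genL, fldA, angOp, pdV u hu, crossA, VV]
  · simp [lamV, emb4, genL, fldA, angOp, pdV u hu, crossA, VV]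
  · simp [lamV, emb4, genL, fldA, pdV u hu, hid]

lemma lamM_eq (a : Fin 4) (u : MF3) (hu : ContDiff ℝ (⊤ : ℕ∞) u) :
    lamM (emb4 a) u = genL ![VM 0, VM 1, VM 2, 0] a u := by
  funext x j k
  have hid : (∑ l, x l * fderiv ℝ u x (EuclideanSpace.single l 1) j k) = fderiv ℝ u x x j k := by
    have := congrArg (fun z => fderiv ℝ u x z j k) (id_expand x)
    simp only [map_sum, map_smul, Finset.sum_apply, Pi.smul_apply, smul_eq_mul] at this
    exact this.symm
  fin_cases a
  · simp [lamM, emb4, genL, fldA, angOp, pdM u hu, crossA, VM]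
  · simp [lamM, emb4, genL, fldA, angOp, pdM u hu, crossA, VM]
  · simp [lamM, emb4, genL, fldA, angOp, pdM u hu, crossA, VM]
  · simp [lamM, emb4, genL, fldA, pdM u hu, hid]

lemma l2V_nonneg (u : VF3) : 0 ≤ l2V u :=
  Real.rpow_nonneg (integral_nonneg fun x => Finset.sum_nonneg fun _ _ => sq_nonneg _) _

lemma l2M_nonneg (u : MF3) : 0 ≤ l2M u :=
  Real.rpow_nonneg (integral_nonneg fun x => Finset.sum_nonneg fun _ _ =>
    Finset.sum_nonneg fun _ _ => sq_nonneg _) _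

lemma sumN_le_V (u : VF3) (hu : ContDiff ℝ (⊤ : ℕ∞) u) :
    sumN (fun w : Fin 3 → ℝ => ∑ j, w j ^ 2) ![VV 0, VV 1, VV 2, 0] u ≤ sum2V u := by
  have e : ∀ v : VF3, l2N (fun w : Fin 3 → ℝ => ∑ j, w j ^ 2) v = l2V v := fun v => rfl
  unfold sumN sum2V
  simp only [e]
  have e2 : ∀ a b, genL ![VV 0, VV 1, VV 2, 0] a (genL ![VV 0, VV 1, VV 2, 0] b u)
      = lamV (emb4 a) (lamV (emb4 b) u) := fun a b => by
    rw [lamV_eq b u hu, lamV_eq a _ (genL_smooth _ _ _ hu)]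
  simp only [e2]
  simp only [← lamV_eq _ u hu]
  gcongr
  · exact sum4_le (fun a => l2V (lamV a u)) fun _ => l2V_nonneg _
  · refine (Finset.sum_le_sum fun a _ => sum4_le (fun b => l2V (lamV (emb4 a) (lamV b u)))
      fun _ => l2V_nonneg _).trans ?_
    exact sum4_le (fun a => ∑ b, l2V (lamV a (lamV b u)))
      fun _ => Finset.sum_nonneg fun _ _ => l2V_nonneg _

lemma sumN_le_M (u : MF3) (hu : ContDiff ℝ (⊤ : ℕ∞) u) :
    sumN (fun w : Fin 3 → Fin 3 → ℝ => ∑ j, ∑ k, w j k ^ 2) ![VM 0, VM 1, VM 2, 0] u ≤ sum2M u := by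
  have e : ∀ v : MF3, l2N (fun w : Fin 3 → Fin 3 → ℝ => ∑ j, ∑ k, w j k ^ 2) v = l2M v := fun v => rfl
  unfold sumN sum2M
  simp only [e]
  have e2 : ∀ a b, genL ![VM 0, VM 1, VM 2, 0] a (genL ![VM 0, VM 1, VM 2, 0] b u)
      = lamM (emb4 a) (lamM (emb4 b) u) := fun a b => by
    rw [lamM_eq b u hu, lamM_eq a _ (genL_smooth _ _ _ hu)]
  simp only [e2]
  simp only [← lamM_eq _ u hu]
  gcongr
  · exact sum4_le (fun a => l2M (lamM a u)) fun _ => l2M_nonneg _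
  · refine (Finset.sum_le_sum fun a _ => sum4_le (fun b => l2M (lamM (emb4 a) (lamM b u)))
      fun _ => l2M_nonneg _).trans ?_
    exact sum4_le (fun a => ∑ b, l2M (lamM a (lamM b u)))
      fun _ => Finset.sum_nonneg fun _ _ => l2M_nonneg _

lemma pi_norm_sq_le {G : Type*} [NormedAddCommGroup G] (w : Fin 3 → G) :
    ‖w‖ ^ 2 ≤ ∑ j, ‖w j‖ ^ 2 := by
  have h0 : 0 ≤ ∑ j, ‖w j‖ ^ 2 := by positivity
  have : ‖w‖ ≤ Real.sqrt (∑ j, ‖w j‖ ^ 2) := by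
    rw [pi_norm_le_iff_of_nonneg (Real.sqrt_nonneg _)]
    intro i
    apply Real.le_sqrt_of_sq_le
    exact Finset.single_le_sum (f := fun j => ‖w j‖ ^ 2) (fun _ _ => sq_nonneg _) (Finset.mem_univ i)
  calc ‖w‖ ^ 2 ≤ Real.sqrt (∑ j, ‖w j‖ ^ 2) ^ 2 := by gcongr
    _ = _ := Real.sq_sqrt h0

lemma omega_sum (x : E3) (w : Fin 3 → ℝ) (B : ℝ)
    (h : ∀ i, ‖x‖ ^ ((3 : ℝ) / 2) * |w i| ≤ B) :
    ‖x‖ ^ ((3 : ℝ) / 2) * |∑ i, (x i / ‖x‖) * w i| ≤ 3 * B := by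
  have h1 : |∑ i, (x i / ‖x‖) * w i| ≤ ∑ i, |w i| := by
    refine (Finset.abs_sum_le_sum_abs _ _).trans (Finset.sum_le_sum fun i _ => ?_)
    rw [abs_mul]
    have : |x i / ‖x‖| ≤ 1 := by
      rw [abs_div, abs_norm]
      exact div_le_one_of_le₀ (by simpa using PiLp.norm_apply_le x i) (norm_nonneg _)
    nlinarith [abs_nonneg (w i)]
  calc _ ≤ ‖x‖ ^ ((3 : ℝ) / 2) * ∑ i, |w i| := by gcongr
    _ = ∑ i, ‖x‖ ^ ((3 : ℝ) / 2) * |w i| := Finset.mul_sum _ _ _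
    _ ≤ ∑ i : Fin 3, B := Finset.sum_le_sum fun i _ => h i
    _ = 3 * B := by simp

/-- there is a constant `C > 0` such that (i) for divergence-free
`u ∈ C_c^∞(ℝ³;ℝ³)` and `x ≠ 0`, `|x|^{3/2} |ω·u(x)| ≤ C Σ_{|α|≤2} ‖Λ^α u‖_{L²}`, and
(ii) for `G ∈ C_c^∞(ℝ³;M₃(ℝ))` with `∂_m G_{mj} = 0` and `x ≠ 0`, for each `j`,
`|x|^{3/2} |ω_i G_{ij}(x)| ≤ C Σ_{|α|≤2} ‖Λ^α G‖_{L²}`, where `ω = x/|x|`. -/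
theorem radial_component_decay :
    ∃ C > 0,
      (∀ u : VF3, ContDiff ℝ (⊤ : ℕ∞) u → HasCompactSupport u →
        (∀ x : E3, ∑ j, pd j (fun y => u y j) x = 0) →
        ∀ x : E3, x ≠ 0 →
          ‖x‖ ^ ((3 : ℝ) / 2) * |∑ i, (x i / ‖x‖) * u x i| ≤ C * sum2V u) ∧
      (∀ G : MF3, ContDiff ℝ (⊤ : ℕ∞) G → HasCompactSupport G →
        (∀ x : E3, ∀ j : Fin 3, ∑ m, pd m (fun y => G y m j) x = 0) →
        ∀ x : E3, x ≠ 0 → ∀ j : Fin 3,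
          ‖x‖ ^ ((3 : ℝ) / 2) * |∑ i, (x i / ‖x‖) * G x i j| ≤ C * sum2M G) := by
  obtain ⟨C1, hC1, h1⟩ := final_gen (fun w : Fin 3 → ℝ => ∑ j, w j ^ 2) (by fun_prop) (by simp)
    (fun w => by simpa using pi_norm_sq_le w) ![VV 0, VV 1, VV 2, 0]
  obtain ⟨C2, hC2, h2⟩ := final_gen (fun w : Fin 3 → Fin 3 → ℝ => ∑ j, ∑ k, w j k ^ 2)
    (by fun_prop) (by simp)
    (fun w => (pi_norm_sq_le w).trans (Finset.sum_le_sum fun j _ => by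
      simpa using pi_norm_sq_le (w j))) ![VM 0, VM 1, VM 2, 0]
  refine ⟨3 * max C1 C2, by positivity, ?_, ?_⟩
  · intro u hu hs _ x hx
    rw [mul_assoc]
    refine omega_sum x (u x) _ fun i => ?_
    have := h1 u hu hs (ContinuousLinearMap.proj (R := ℝ) (φ := fun _ : Fin 3 => ℝ) i)
      (fun w => norm_le_pi_norm w i) x hx
    refine this.trans ?_
    exact mul_le_mul (le_max_left _ _) (sumN_le_V u hu) (sumN_nonneg _
      (fun w => by simpa using pi_norm_sq_le w) _ _) (by positivity)
  · intro u hu hs _ x hx j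
    rw [mul_assoc]
    refine omega_sum x (fun i => u x i j) _ fun i => ?_
    have := h2 u hu hs ((ContinuousLinearMap.proj (R := ℝ) (φ := fun _ : Fin 3 => ℝ) j).comp
      (ContinuousLinearMap.proj (R := ℝ) (φ := fun _ : Fin 3 => Fin 3 → ℝ) i))
      (fun w => (norm_le_pi_norm (w i) j).trans (norm_le_pi_norm w i)) x hx
    refine this.trans ?_
    exact mul_le_mul (le_max_right _ _) (sumN_le_M u hu) (sumN_nonneg _
      (fun w => (pi_norm_sq_le w).trans (Finset.sum_le_sum fun j _ => by
        simpa using pi_norm_sq_le (w j))) _ _) (by positivity)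

end
end

section
/- Let G ∈ C_c^∞(ℝ³; M₃(ℝ)) satisfy the constraint ∂_k G_{ij} − ∂_j G_{ik} = G_{lj}∂_l G_{ik} − G_{lk}∂_l G_{ij} for all i, j, k (summation over l). Then for every t ∈ ℝ, writing r = |x|: ‖(t−r)∇G‖² ≤ 8‖G‖² + 3‖(t−r)∇·G‖² + 2Q, where (∇·G)_i = ∂_j G_{ij}, ‖∇G‖² = ∫ Σ_{i,j,k} (∂_j G_{ik})² dx, and Q = ∫_{ℝ³} (t−r)² ∂_j G_{ik} ( G_{lk}∂_l G_{ij} − G_{lj}∂_l G_{ik} ) dx (summation over all repeated indices). -/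
open MeasureTheory

noncomputable section

lemma pd_contDiff (j : Fin 3) {u : E3 → ℝ} (hu : ContDiff ℝ (⊤ : ℕ∞) u) :
    ContDiff ℝ (⊤ : ℕ∞) (pd j u) :=
  (hu.fderiv_right (m := (⊤ : ℕ∞)) (by simp)).clm_apply contDiff_const

lemma pd_supp (j : Fin 3) {u : E3 → ℝ} (hu : HasCompactSupport u) :
    HasCompactSupport (pd j u) := hu.fderiv_apply ℝ _

lemma pd_mul (j : Fin 3) {u v : E3 → ℝ} (hu : ContDiff ℝ (⊤ : ℕ∞) u)
    (hv : ContDiff ℝ (⊤ : ℕ∞) v) (x : E3) :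
    pd j (fun y => u y * v y) x = u x * pd j v x + pd j u x * v x := by
  have h1 : DifferentiableAt ℝ u x := (hu.differentiable (by simp)) x
  have h2 : DifferentiableAt ℝ v x := (hv.differentiable (by simp)) x
  unfold pd
  rw [fderiv_fun_mul h1 h2]
  simp [mul_comm]

lemma pd_sub (j : Fin 3) {u v : E3 → ℝ} (hu : ContDiff ℝ (⊤ : ℕ∞) u)
    (hv : ContDiff ℝ (⊤ : ℕ∞) v) (x : E3) :
    pd j (fun y => u y - v y) x = pd j u x - pd j v x := by
  have h1 : DifferentiableAt ℝ u x := (hu.differentiable (by simp)) x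
  have h2 : DifferentiableAt ℝ v x := (hv.differentiable (by simp)) x
  unfold pd
  rw [fderiv_fun_sub h1 h2]
  simp

lemma pd_sum (j : Fin 3) {u : Fin 3 → E3 → ℝ} (hu : ∀ k, ContDiff ℝ (⊤ : ℕ∞) (u k))
    (x : E3) :
    pd j (fun y => ∑ k, u k y) x = ∑ k, pd j (u k) x := by
  unfold pd
  rw [fderiv_fun_sum (fun k _ => (hu k).differentiable (by simp) x)]
  simp

lemma pd_comm (j k : Fin 3) {u : E3 → ℝ} (hu : ContDiff ℝ (⊤ : ℕ∞) u) (x : E3) :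
    pd j (pd k u) x = pd k (pd j u) x := by
  have hs : IsSymmSndFDerivAt ℝ u x :=
    hu.contDiffAt.isSymmSndFDerivAt (by
      rw [minSmoothness_of_isRCLikeNormedField]
      exact WithTop.coe_le_coe.2 (le_top : (2 : ℕ∞) ≤ ⊤))
  have hd : DifferentiableAt ℝ (fderiv ℝ u) x :=
    (hu.fderiv_right (m := (⊤ : ℕ∞)) (by simp)).differentiable (by simp) x
  have key : ∀ a b : Fin 3, pd a (pd b u) x =
      fderiv ℝ (fderiv ℝ u) x (EuclideanSpace.single a 1) (EuclideanSpace.single b 1) := by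
    intro a b
    have : pd b u = fun y => fderiv ℝ u y (EuclideanSpace.single b 1) := rfl
    rw [this, pd, fderiv_clm_apply hd (differentiableAt_const _)]
    simp
  rw [key, key, hs]

lemma pd_eq_lineDeriv (j : Fin 3) {u : E3 → ℝ} (x : E3) (hu : DifferentiableAt ℝ u x) :
    lineDeriv ℝ u x (EuclideanSpace.single j 1) = pd j u x :=
  hu.lineDeriv_eq_fderiv

lemma pd_normsq (j : Fin 3) (x : E3) : pd j (fun y => ‖y‖ ^ 2) x = 2 * x j := by
  unfold pd
  rw [fderiv_norm_sq_apply]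
  simp [EuclideanSpace.inner_single_right]

lemma lineDeriv_norm (j : Fin 3) (x : E3) (hx : x ≠ 0) :
    lineDeriv ℝ (fun y : E3 => ‖y‖) x (EuclideanSpace.single j 1) = x j / ‖x‖ := by
  have hd : DifferentiableAt ℝ (fun y : E3 => ‖y‖) x :=
    (contDiffAt_norm ℝ hx (n := 1)).differentiableAt (by simp)
  rw [hd.lineDeriv_eq_fderiv]
  have h1 := pd_normsq j x
  have h2 : fderiv ℝ (fun y : E3 => ‖y‖ ^ 2) x = _ := fderiv_fun_pow 2 hd
  unfold pd at h1
  rw [h2] at h1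
  have : ‖x‖ ≠ 0 := norm_ne_zero_iff.2 hx
  field_simp
  simp at h1
  linarith

lemma omega_le (j : Fin 3) (x : E3) : |x j / ‖x‖| ≤ 1 := by
  rw [abs_div, abs_norm]
  exact div_le_one_of_le₀ (PiLp.norm_apply_le x j) (norm_nonneg _)

lemma omega_sq (x : E3) : ∑ j, (x j / ‖x‖) ^ 2 ≤ 1 := by
  simp_rw [div_pow, ← Finset.sum_div]
  rw [EuclideanSpace.real_norm_sq_eq]
  exact div_self_le_one _

lemma int_omega (j : Fin 3) {φ : E3 → ℝ} (h : Integrable φ) :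
    Integrable (fun x : E3 => x j / ‖x‖ * φ x) := by
  refine h.bdd_mul (c := 1) ?_ (Filter.Eventually.of_forall fun x => omega_le j x)
  exact Measurable.aestronglyMeasurable (by fun_prop)

lemma ibp (j : Fin 3) {φ : E3 → ℝ} (hφ : ContDiff ℝ (⊤ : ℕ∞) φ)
    (hs : HasCompactSupport φ) (t : ℝ) :
    Integrable (fun x : E3 => 2 * (t - ‖x‖) * (x j / ‖x‖) * φ x) ∧
    Integrable (fun x : E3 => (t - ‖x‖) ^ 2 * pd j φ x) ∧
    ∫ x : E3, (t - ‖x‖) ^ 2 * pd j φ x =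
      ∫ x : E3, 2 * (t - ‖x‖) * (x j / ‖x‖) * φ x := by
  have hc := hφ.continuous
  have hpc := (pd_contDiff j hφ).continuous
  have hps := pd_supp j hs
  have hd : Differentiable ℝ φ := hφ.differentiable (by simp)
  -- smooth part
  have hgs : ContDiff ℝ (⊤ : ℕ∞) (fun y : E3 => t ^ 2 + ‖y‖ ^ 2) :=
    contDiff_const.add (contDiff_norm_sq ℝ)
  have hg : ContDiff ℝ (⊤ : ℕ∞) (fun y : E3 => (t ^ 2 + ‖y‖ ^ 2) * φ y) := hgs.mul hφ
  have hgsupp : HasCompactSupport (fun y : E3 => (t ^ 2 + ‖y‖ ^ 2) * φ y) := hs.mul_left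
  obtain ⟨C, hC⟩ := ContDiff.lipschitzWith_of_hasCompactSupport hgsupp hg (by simp)
  obtain ⟨D, hD⟩ := ContDiff.lipschitzWith_of_hasCompactSupport hs hφ (by simp)
  have e1 := (LipschitzWith.const (1 : ℝ) : LipschitzWith 0 (fun _ : E3 => (1 : ℝ))).integral_lineDeriv_mul_eq
    (μ := volume) hC hgsupp (EuclideanSpace.single j 1)
  have e2 := (lipschitzWith_one_norm (E := E3)).integral_lineDeriv_mul_eq
    (μ := volume) hD hs (EuclideanSpace.single j 1)
  have hp : ∀ x : E3, pd j (fun y : E3 => (t ^ 2 + ‖y‖ ^ 2) * φ y) x =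
      (t ^ 2 + ‖x‖ ^ 2) * pd j φ x + 2 * x j * φ x := by
    intro x
    rw [pd_mul j hgs hφ, ← pd_normsq]
    congr 2
    simp [pd]
  have e1' : ∫ x : E3, ((t ^ 2 + ‖x‖ ^ 2) * pd j φ x + 2 * x j * φ x) = 0 := by
    simp_rw [lineDeriv_neg, (hg.differentiable (by simp) _).lineDeriv_eq_fderiv] at e1
    change _ = ∫ x, - pd j _ x * 1 at e1
    simp_rw [hp] at e1
    rw [← neg_eq_zero, ← integral_neg]
    have hl : ∀ x : E3, lineDeriv ℝ (fun _ : E3 => (1 : ℝ)) x (EuclideanSpace.single j 1) = 0 := by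
      intro x
      simp [lineDeriv]
    simp_rw [hl] at e1
    simpa using e1.symm
  have e2' : ∫ x : E3, x j / ‖x‖ * φ x = - ∫ x : E3, ‖x‖ * pd j φ x := by
    rw [← integral_neg]
    simp_rw [lineDeriv_neg, (hd _).lineDeriv_eq_fderiv] at e2
    rw [integral_congr_ae (g := fun x : E3 => lineDeriv ℝ norm x (EuclideanSpace.single j 1) * φ x), e2]
    · congr 1; ext x; simp [pd, mul_comm]
    · have : ∀ᵐ x : E3, x ≠ 0 := by simp [ae_iff]
      filter_upwards [this] with x hx
      rw [← lineDeriv_norm j x hx]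
  have i1 : Integrable (fun x : E3 => (t ^ 2 + ‖x‖ ^ 2) * pd j φ x + 2 * x j * φ x) :=
    Continuous.integrable_of_hasCompactSupport (by fun_prop) (hps.mul_left.add hs.mul_left)
  have i2 : Integrable (fun x : E3 => ‖x‖ * pd j φ x) :=
    Continuous.integrable_of_hasCompactSupport (by fun_prop) hps.mul_left
  have i3 : Integrable (fun x : E3 => x j / ‖x‖ * φ x) :=
    int_omega j (hc.integrable_of_hasCompactSupport hs)
  have i4 : Integrable (fun x : E3 => (t - ‖x‖) ^ 2 * pd j φ x) :=
    Continuous.integrable_of_hasCompactSupport (by fun_prop) hps.mul_left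
  have i5 : Integrable (fun x : E3 => 2 * (t - ‖x‖) * (x j / ‖x‖) * φ x) := by
    have : Integrable (fun x : E3 => x j / ‖x‖ * (2 * (t - ‖x‖) * φ x)) := int_omega j
      (Continuous.integrable_of_hasCompactSupport (by fun_prop) hs.mul_left)
    refine this.congr (Filter.Eventually.of_forall fun x => ?_)
    simp only []
    ring
  refine ⟨i5, i4, ?_⟩
  rw [← sub_eq_zero, ← integral_sub i4 i5]
  have : ∀ x : E3, (t - ‖x‖) ^ 2 * pd j φ x - 2 * (t - ‖x‖) * (x j / ‖x‖) * φ x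
      = ((t ^ 2 + ‖x‖ ^ 2) * pd j φ x + 2 * x j * φ x)
        - 2 * t * (‖x‖ * pd j φ x + x j / ‖x‖ * φ x) := by
    intro x
    by_cases hx : x = 0
    · subst hx; simp
    · have : ‖x‖ ≠ 0 := norm_ne_zero_iff.2 hx
      field_simp
      ring
  simp_rw [this]
  have i6 : Integrable (fun x : E3 => ‖x‖ * pd j φ x + x j / ‖x‖ * φ x) := i2.add i3
  rw [integral_sub i1 (i6.const_mul _), e1', integral_const_mul]
  rw [integral_add i2 i3, e2']
  ring

lemma pointwise (s d : ℝ) (ω v : Fin 3 → ℝ) (M : Fin 3 → Fin 3 → ℝ) (hω : ∑ j, ω j ^ 2 ≤ 1) :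
    ∑ j, 2 * s * ω j * (∑ k, v k * M k j - v j * d) ≤
      1 / 2 * (s ^ 2 * ∑ j, ∑ k, M j k ^ 2) + 4 * ∑ k, v k ^ 2 + 1 / 2 * (s ^ 2 * d ^ 2) := by
  have cs : (∑ j, ω j * v j) ^ 2 ≤ (∑ j, ω j ^ 2) * ∑ j, v j ^ 2 :=
    Finset.sum_mul_sq_le_sq_mul_sq _ _ _
  have hv : 0 ≤ ∑ k, v k ^ 2 := Finset.sum_nonneg fun _ _ => sq_nonneg _
  have h1 : (∑ j, ω j ^ 2) * ∑ j, v j ^ 2 ≤ ∑ j, v j ^ 2 := by nlinarith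
  have h2 : ∑ j, ∑ k, 2 * (s * M k j) * (ω j * v k) ≤
      ∑ j, ∑ k, (1 / 2 * (s * M k j) ^ 2 + 2 * (ω j * v k) ^ 2) := by
    refine Finset.sum_le_sum fun j _ => Finset.sum_le_sum fun k _ => ?_
    nlinarith [sq_nonneg (s * M k j - 2 * (ω j * v k))]
  have h3 := sq_nonneg (2 * (∑ j, ω j * v j) + s * d)
  simp only [Fin.sum_univ_three] at *
  nlinarith

/-- if `G ∈ C_c^∞(ℝ³; M₃(ℝ))` satisfies the constraint
`∂_k G_{ij} − ∂_j G_{ik} = G_{lj}∂_l G_{ik} − G_{lk}∂_l G_{ij}`, then for every `t ∈ ℝ`,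
`‖(t−r)∇G‖² ≤ 8‖G‖² + 3‖(t−r)∇·G‖² + 2Q`, with
`Q = ∫ (t−r)² ∂_j G_{ik} (G_{lk}∂_l G_{ij} − G_{lj}∂_l G_{ik}) dx`. -/
theorem weighted_gradient_estimate_from_constraint
    (G : MF3) (hG : ContDiff ℝ (⊤ : ℕ∞) G) (hsupp : HasCompactSupport G)
    (hcon : ∀ (x : E3) (i j k : Fin 3),
      pd k (fun y => G y i j) x - pd j (fun y => G y i k) x =
        ∑ l, (G x l j * pd l (fun y => G y i k) x - G x l k * pd l (fun y => G y i j) x)) :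
    ∀ t : ℝ,
      (∫ x : E3, (t - ‖x‖) ^ 2 * ∑ i, ∑ j, ∑ k, (pd j (fun y => G y i k) x) ^ 2)
        ≤ 8 * (∫ x : E3, ∑ i, ∑ k, (G x i k) ^ 2)
          + 3 * (∫ x : E3, (t - ‖x‖) ^ 2 * ∑ i, (∑ j, pd j (fun y => G y i j) x) ^ 2)
          + 2 * ∫ x : E3, (t - ‖x‖) ^ 2 *
              ∑ i, ∑ j, ∑ k, pd j (fun y => G y i k) x *
                (∑ l, (G x l k * pd l (fun y => G y i j) x
                  - G x l j * pd l (fun y => G y i k) x)) := by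
  intro t
  have hg : ∀ i k, ContDiff ℝ (⊤ : ℕ∞) (fun y => G y i k) := fun i k =>
    contDiff_pi.1 (contDiff_pi.1 hG i) k
  have hgs : ∀ i k, HasCompactSupport (fun y => G y i k) := fun i k =>
    hsupp.comp_left (g := fun A : Fin 3 → Fin 3 → ℝ => A i k) rfl
  have hp : ∀ i j k, ContDiff ℝ (⊤ : ℕ∞) (pd j (fun y => G y i k)) := fun i j k =>
    pd_contDiff j (hg i k)
  have hps : ∀ i j k, HasCompactSupport (pd j (fun y => G y i k)) := fun i j k =>
    pd_supp j (hgs i k)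
  have hgc := fun i k => (hg i k).continuous
  have hpc := fun i j k => (hp i j k).continuous
  have hdiv : ∀ i, ContDiff ℝ (⊤ : ℕ∞) (fun y => ∑ k, pd k (fun y => G y i k) y) := fun i =>
    ContDiff.sum fun k _ => hp i k k
  let Φ : Fin 3 → Fin 3 → E3 → ℝ := fun i j y =>
    (∑ k, G y i k * pd k (fun y => G y i j) y) - G y i j * ∑ k, pd k (fun y => G y i k) y
  have hΦ : ∀ i j, ContDiff ℝ (⊤ : ℕ∞) (Φ i j) := fun i j =>
    (ContDiff.sum fun k _ => (hg i k).mul (hp i k j)).sub ((hg i j).mul (hdiv i))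
  -- everything vanishes off the support of `G`
  have hz : ∀ x, x ∉ tsupport G → (∀ i k, G x i k = 0) ∧ ∀ i j k, pd j (fun y => G y i k) x = 0 := by
    intro x hx
    have hev : G =ᶠ[nhds x] 0 := notMem_tsupport_iff_eventuallyEq.1 hx
    refine ⟨fun i k => by simp [hev.eq_of_nhds], fun i j k => ?_⟩
    have : (fun y => G y i k) =ᶠ[nhds x] fun _ => (0 : ℝ) := by
      filter_upwards [hev] with y hy
      simp [hy]
    simp [pd, this.fderiv_eq]
  have hΦs : ∀ i j, HasCompactSupport (Φ i j) := fun i j =>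
    HasCompactSupport.intro hsupp fun x hx => by simp [Φ, (hz x hx).1]
  have hdΦ : ∀ i x, ∑ j, pd j (Φ i j) x =
      ∑ j, ∑ k, pd j (fun y => G y i k) x * pd k (fun y => G y i j) x
        - (∑ j, pd j (fun y => G y i j) x) ^ 2 := by
    intro i x
    have : ∀ j, pd j (Φ i j) x =
        (∑ k, (G x i k * pd j (pd k (fun y => G y i j)) x
          + pd j (fun y => G y i k) x * pd k (fun y => G y i j) x))
        - (G x i j * (∑ k, pd k (pd j (fun y => G y i k)) x)
          + pd j (fun y => G y i j) x * ∑ k, pd k (fun y => G y i k) x) := by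
      intro j
      rw [pd_sub j (ContDiff.sum fun k _ => (hg i k).mul (hp i k j)) ((hg i j).mul (hdiv i)),
        pd_sum j (fun k => (hg i k).mul (hp i k j)), pd_mul j (hg i j) (hdiv i),
        pd_sum j (fun k => hp i k k)]
      congr 2
      · ext k
        exact pd_mul j (hg i k) (hp i k j) x
      · congr 2
        ext k
        exact pd_comm j k (hg i k) x
    simp_rw [this]
    have hcm : ∀ a b c, pd a (pd b (fun y => G y i c)) x = pd b (pd a (fun y => G y i c)) x :=
      fun a b c => pd_comm a b (hg i c) x
    simp only [Fin.sum_univ_three]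
    simp only [hcm 1 0, hcm 2 0, hcm 2 1]
    ring
  -- names for the integrands
  set a : E3 → ℝ := fun x => (t - ‖x‖) ^ 2 * ∑ i, ∑ j, ∑ k, (pd j (fun y => G y i k) x) ^ 2 with ha
  set n : E3 → ℝ := fun x => ∑ i, ∑ k, (G x i k) ^ 2 with hn
  set d : E3 → ℝ := fun x => (t - ‖x‖) ^ 2 * ∑ i, (∑ j, pd j (fun y => G y i j) x) ^ 2 with hd
  set q : E3 → ℝ := fun x => (t - ‖x‖) ^ 2 *
              ∑ i, ∑ j, ∑ k, pd j (fun y => G y i k) x *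
                (∑ l, (G x l k * pd l (fun y => G y i j) x
                  - G x l j * pd l (fun y => G y i k) x)) with hq
  have ia : Integrable a := Continuous.integrable_of_hasCompactSupport (by fun_prop)
    (HasCompactSupport.intro hsupp fun x hx => by simp [ha, (hz x hx).2])
  have iN : Integrable n := Continuous.integrable_of_hasCompactSupport (by fun_prop)
    (HasCompactSupport.intro hsupp fun x hx => by simp [hn, (hz x hx).1])
  have iD : Integrable d := Continuous.integrable_of_hasCompactSupport (by fun_prop)
    (HasCompactSupport.intro hsupp fun x hx => by simp [hd, (hz x hx).2])
  have iQ : Integrable q := Continuous.integrable_of_hasCompactSupport (by fun_prop)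
    (HasCompactSupport.intro hsupp fun x hx => by simp [hq, (hz x hx).2])
  have I := fun i j => ibp j (hΦ i j) (hΦs i j) t
  let b : E3 → ℝ := fun x => ∑ i, ∑ j, (t - ‖x‖) ^ 2 * pd j (Φ i j) x
  let c : E3 → ℝ := fun x => ∑ i, ∑ j, 2 * (t - ‖x‖) * (x j / ‖x‖) * Φ i j x
  have ib : Integrable b := integrable_finsetSum _ fun i _ => integrable_finsetSum _ fun j _ => (I i j).2.1
  have ic : Integrable c := integrable_finsetSum _ fun i _ => integrable_finsetSum _ fun j _ => (I i j).1
  have hbc : ∫ x, b x = ∫ x, c x := by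
    simp only [b, c]
    rw [integral_finsetSum _ fun i _ => integrable_finsetSum _ fun j _ => (I i j).2.1,
      integral_finsetSum _ fun i _ => integrable_finsetSum _ fun j _ => (I i j).1]
    refine Finset.sum_congr rfl fun i _ => ?_
    rw [integral_finsetSum _ fun j _ => (I i j).2.1, integral_finsetSum _ fun j _ => (I i j).1]
    exact Finset.sum_congr rfl fun j _ => (I i j).2.2
  have hsplit : ∀ x, a x = q x + d x + b x := by
    intro x
    simp only [ha, hq, hd, b, ← Finset.mul_sum, hdΦ, ← mul_add, ← Finset.sum_add_distrib]
    congr 1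
    refine Finset.sum_congr rfl fun i _ => ?_
    simp only [← hcon x i _ _]
    simp only [Fin.sum_univ_three]
    ring
  have hle : ∀ x, c x ≤ 1 / 2 * a x + 4 * n x + 1 / 2 * d x := by
    intro x
    have := Finset.sum_le_sum fun i (_ : i ∈ Finset.univ) =>
      pointwise (t - ‖x‖) (∑ k, pd k (fun y => G y i k) x) (fun j => x j / ‖x‖) (G x i)
      (fun j k => pd j (fun y => G y i k) x) (omega_sq x)
    refine this.trans_eq ?_
    simp only [ha, hn, hd, Finset.sum_add_distrib, Finset.mul_sum]
  have E1 : ∫ x, a x = (∫ x, q x) + (∫ x, d x) + ∫ x, b x := by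
    have iqd : Integrable (fun x => q x + d x) := iQ.add iD
    rw [← integral_add iQ iD, ← integral_add iqd ib]
    exact integral_congr_ae (Filter.Eventually.of_forall hsplit)
  have ian : Integrable (fun x => 1 / 2 * a x + 4 * n x) :=
    (ia.const_mul _).add (iN.const_mul _)
  have E2 : ∫ x, c x ≤ 1 / 2 * (∫ x, a x) + 4 * (∫ x, n x) + 1 / 2 * ∫ x, d x := by
    rw [← integral_const_mul, ← integral_const_mul, ← integral_const_mul,
      ← integral_add (ia.const_mul _) (iN.const_mul _),
      ← integral_add ian (iD.const_mul _)]
    exact integral_mono ic (ian.add (iD.const_mul _)) hle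
  linarith

end
end

section
/- Let G be a real 3×3 matrix with ‖G‖_F ≤ 1 and det(I + G) = 1. Then |tr G| ≤ 3 ‖G‖_F². -/
lemma aux_mul_minor (x p q r s : ℝ) (hx : x ^ 2 ≤ 1) :
    |x * (p * q - r * s)| ≤ (p ^ 2 + q ^ 2 + r ^ 2 + s ^ 2) / 2 := by
  have h1 : |x| ≤ 1 := by
    rw [← sq_le_one_iff_abs_le_one]; exact hx
  have h2 : |p * q - r * s| ≤ (p ^ 2 + q ^ 2 + r ^ 2 + s ^ 2) / 2 := by
    rw [abs_le]
    constructor <;>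
    linarith [sq_nonneg (p - q), sq_nonneg (p + q), sq_nonneg (r - s), sq_nonneg (r + s)]
  rw [abs_mul]
  have := mul_le_mul_of_nonneg_right h1 (abs_nonneg (p * q - r * s))
  linarith

/-- If `G` is a real 3×3 matrix with `‖G‖_F ≤ 1` and `det(I + G) = 1`,
then `|tr G| ≤ 3 ‖G‖_F²`. -/
theorem trace_small_of_incompressible (G : Matrix (Fin 3) (Fin 3) ℝ)
    (hG : Real.sqrt (∑ i, ∑ j, G i j ^ 2) ≤ 1)
    (hdet : (1 + G).det = 1) :
    |G.trace| ≤ 3 * (∑ i, ∑ j, G i j ^ 2) := by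
  rw [Real.sqrt_le_iff, one_pow] at hG
  replace hG := hG.2
  rw [Matrix.det_fin_three] at hdet
  simp [Matrix.one_apply] at hdet
  simp only [Matrix.trace, Matrix.diag, Fin.sum_univ_three] at hG ⊢
  generalize G 0 0 = a at *
  generalize G 0 1 = b at *
  generalize G 0 2 = c at *
  generalize G 1 0 = d at *
  generalize G 1 1 = e at *
  generalize G 1 2 = f at *
  generalize G 2 0 = g at *
  generalize G 2 1 = h at *
  generalize G 2 2 = k at *
  have sa := sq_nonneg a
  have sb := sq_nonneg b
  have sc := sq_nonneg c
  have sd := sq_nonneg d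
  have se := sq_nonneg e
  have sf := sq_nonneg f
  have sg := sq_nonneg g
  have sh := sq_nonneg h
  have sk := sq_nonneg k
  have h1 := abs_le.1 (aux_mul_minor a e k f h (by linarith))
  have h2 := abs_le.1 (aux_mul_minor b d k f g (by linarith))
  have h3 := abs_le.1 (aux_mul_minor c d h e g (by linarith))
  have m1 := abs_le.1 (aux_mul_minor 1 a e b d (by norm_num))
  have m2 := abs_le.1 (aux_mul_minor 1 a k c g (by norm_num))
  have m3 := abs_le.1 (aux_mul_minor 1 e k f h (by norm_num))
  have key : a + e + k = -(1 * (a * e - b * d) + 1 * (a * k - c * g) + 1 * (e * k - f * h))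
      - (a * (e * k - f * h) - b * (d * k - f * g) + c * (d * h - e * g)) := by
    linear_combination hdet
  rw [key, abs_le]
  constructor <;> linarith [h1.1, h1.2, h2.1, h2.2, h3.1, h3.2, m1.1, m1.2, m2.1, m2.2, m3.1, m3.2]
end

section
/- Let G be a real 3×3 matrix with ‖G‖_F ≤ 1 and det(I + G) = 1, and set τ = (1/2) tr((I+G)(I+G)ᵀ). Then |τ − 3/2| ≤ 4 ‖G‖_F². -/
open Matrix

lemma minor_abs_le (a b c d : ℝ) : |a * d - b * c| ≤ (a ^ 2 + b ^ 2 + c ^ 2 + d ^ 2) / 2 := by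
  rw [abs_le]
  constructor <;> nlinarith [sq_nonneg (a - d), sq_nonneg (a + d), sq_nonneg (b - c), sq_nonneg (b + c)]

lemma mul_minor_abs_le (g a b c d : ℝ) (hg : g ^ 2 ≤ 1) :
    |g * (a * d - b * c)| ≤ (a ^ 2 + b ^ 2 + c ^ 2 + d ^ 2) / 2 := by
  rw [abs_mul]
  have h1 : |g| ≤ 1 := by
    rw [abs_le]
    constructor <;> nlinarith
  have h2 := minor_abs_le a b c d
  have h3 := mul_le_mul_of_nonneg_right h1 (abs_nonneg (a * d - b * c))
  linarith

/-- If `G` is a real 3×3 matrix with `‖G‖_F ≤ 1` and `det(I + G) = 1`, and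
`τ = (1/2) tr((I+G)(I+G)ᵀ)`, then `|τ − 3/2| ≤ 4 ‖G‖_F²`. -/
theorem first_invariant_near_three_halves (G : Matrix (Fin 3) (Fin 3) ℝ)
    (hG : Real.sqrt (∑ i, ∑ j, G i j ^ 2) ≤ 1)
    (hdet : (1 + G).det = 1) :
    |(1 / 2) * ((1 + G) * (1 + G)ᵀ).trace - 3 / 2| ≤ 4 * (∑ i, ∑ j, G i j ^ 2) := by
  have hS : (∑ i, ∑ j, G i j ^ 2) ≤ 1 := by
    have h1 := (Real.sqrt_le_iff.1 hG).2
    simpa using h1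
  rw [Matrix.det_fin_three] at hdet
  simp only [Matrix.trace, Matrix.diag, Matrix.mul_apply, Matrix.transpose_apply, Matrix.add_apply,
    Fin.sum_univ_three, Matrix.one_apply] at *
  simp at hdet ⊢
  generalize G 0 0 = a at *
  generalize G 0 1 = b at *
  generalize G 0 2 = c at *
  generalize G 1 0 = d at *
  generalize G 1 1 = e at *
  generalize G 1 2 = f at *
  generalize G 2 0 = g at *
  generalize G 2 1 = h at *
  generalize G 2 2 = i at *
  have pa := sq_nonneg a
  have pb := sq_nonneg b
  have pc := sq_nonneg c
  have pd := sq_nonneg d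
  have pe := sq_nonneg e
  have pf := sq_nonneg f
  have pg := sq_nonneg g
  have ph := sq_nonneg h
  have pi := sq_nonneg i
  have m1 := abs_le.1 (minor_abs_le a b d e)
  have m2 := abs_le.1 (minor_abs_le a c g i)
  have m3 := abs_le.1 (minor_abs_le e f h i)
  have n1 := abs_le.1 (mul_minor_abs_le a e f h i (by linarith))
  have n2 := abs_le.1 (mul_minor_abs_le b d f g i (by linarith))
  have n3 := abs_le.1 (mul_minor_abs_le c d e g h (by linarith))
  obtain ⟨m1, m1'⟩ := m1
  obtain ⟨m2, m2'⟩ := m2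
  obtain ⟨m3, m3'⟩ := m3
  obtain ⟨n1, n1'⟩ := n1
  obtain ⟨n2, n2'⟩ := n2
  obtain ⟨n3, n3'⟩ := n3
  rw [abs_le]
  constructor <;> linarith
end

section
/- Let Φ : ℝ × ℝ³ → ℝ³ be smooth, suppose that for each t the map Φ(t,·) : ℝ³ → ℝ³ is a bijection whose inverse Ψ(t,·) is such that Ψ : ℝ × ℝ³ → ℝ³ is smooth, and assume det (D_X Φ)(t,X) = 1 for all (t,X). Define the Eulerian velocity v(t,x) = (∂_t Φ)(t, Ψ(t,x)). Then v is divergence free: ∂_k v_k(t,x) = 0 for all (t,x). -/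
noncomputable section

/-- for a smooth family of diffeomorphisms `Φ(t,·)` with smooth inverse
`Ψ(t,·)` satisfying `det D_XΦ ≡ 1`, the Eulerian velocity `v(t,x) = (∂_tΦ)(t,Ψ(t,x))` is
divergence free: `∂_k v_k = 0`. -/
theorem incompressible_velocity_div_free
    (Φ Ψ : ℝ → E3 → E3)
    (hΦ : ContDiff ℝ (⊤ : ℕ∞) (fun z : ℝ × E3 => Φ z.1 z.2))
    (hΨ : ContDiff ℝ (⊤ : ℕ∞) (fun z : ℝ × E3 => Ψ z.1 z.2))
    (hinv₁ : ∀ t x, Φ t (Ψ t x) = x)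
    (hinv₂ : ∀ t X, Ψ t (Φ t X) = X)
    (hdet : ∀ t X, (Matrix.of fun i j : Fin 3 =>
      fderiv ℝ (Φ t) X (EuclideanSpace.single j 1) i).det = 1)
    (v : ℝ → E3 → Fin 3 → ℝ)
    (hv : ∀ t x i, v t x i = deriv (fun s => Φ s (Ψ t x) i) t) :
    ∀ t x, ∑ k, pd k (fun y => v t y k) x = 0 := by
  intro t x
  set G : ℝ × E3 → E3 := fun z => Φ z.1 (Ψ t z.2) with hG
  have hΨt : ContDiff ℝ (⊤ : ℕ∞) (Ψ t) :=
    hΨ.comp (contDiff_const.prodMk contDiff_id : ContDiff ℝ (⊤ : ℕ∞) fun y : E3 => (t, y))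
  have hΦs : ∀ s, ContDiff ℝ (⊤ : ℕ∞) (Φ s) := fun s =>
    hΦ.comp (contDiff_const.prodMk contDiff_id : ContDiff ℝ (⊤ : ℕ∞) fun y : E3 => (s, y))
  have hGs : ContDiff ℝ (⊤ : ℕ∞) G :=
    hΦ.comp (contDiff_fst.prodMk (hΨt.comp contDiff_snd) :
      ContDiff ℝ (⊤ : ℕ∞) fun z : ℝ × E3 => (z.1, Ψ t z.2))
  have hGd : Differentiable ℝ G := hGs.differentiable (by simp)
  have hDG : Differentiable ℝ (fderiv ℝ G) :=
    (hGs.fderiv_right (m := 1) (by norm_cast)).differentiable (by simp)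
  -- spatial derivative of `G`
  have hslice : ∀ s y, HasFDerivAt (fun y => G (s, y))
      ((fderiv ℝ G (s, y)).comp (ContinuousLinearMap.inr ℝ ℝ E3)) y := fun s y =>
    HasFDerivAt.comp (f := fun y => (s, y)) y (hGd (s, y)).hasFDerivAt (hasFDerivAt_prodMk_right s y)
  -- time derivative of `G`
  have htime : ∀ y k, v t y k = fderiv ℝ G (t, y) (1, 0) k := by
    intro y k
    rw [hv]
    have h1 : HasDerivAt (fun s : ℝ => G (s, y)) (fderiv ℝ G (t, y) (1, 0)) t :=
      HasFDerivAt.comp_hasDerivAt (f := fun s : ℝ => (s, y)) t (hGd (t, y)).hasFDerivAt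
        ((hasDerivAt_id t).prodMk (hasDerivAt_const t y))
    exact ((EuclideanSpace.proj (𝕜 := ℝ) k).hasFDerivAt.comp_hasDerivAt t h1).deriv
  let e : Fin 3 → E3 := fun j => EuclideanSpace.single j 1
  let N : Fin 3 → Fin 3 → ℝ := fun i j => fderiv ℝ (fderiv ℝ G) (t, x) (1, 0) (0, e j) i
  let M : ℝ → Fin 3 → Fin 3 → ℝ := fun s i j => fderiv ℝ G (s, x) (0, e j) i
  have hpd : ∀ k, pd k (fun y => v t y k) x = N k k := by
    intro k
    have h1 : HasFDerivAt (fun y : E3 => fderiv ℝ G (t, y))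
        ((fderiv ℝ (fderiv ℝ G) (t, x)).comp (ContinuousLinearMap.inr ℝ ℝ E3)) x :=
      HasFDerivAt.comp (f := fun y => (t, y)) x (hDG (t, x)).hasFDerivAt
        (hasFDerivAt_prodMk_right t x)
    have h2 := (EuclideanSpace.proj (𝕜 := ℝ) k).hasFDerivAt.comp x
      ((ContinuousLinearMap.apply ℝ E3 ((1, 0) : ℝ × E3)).hasFDerivAt.comp x h1)
    have h3 : (fun y => v t y k) = fun y => fderiv ℝ G (t, y) (1, 0) k := by
      funext y; exact htime y k
    have hsymm := second_derivative_symmetric (𝕜 := ℝ) (fun z => (hGd z).hasFDerivAt)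
      (hDG (t, x)).hasFDerivAt (1, 0) (0, e k)
    unfold pd
    rw [h3]
    refine (congrArg (fun L => L (EuclideanSpace.single k 1)) h2.fderiv).trans ?_
    show fderiv ℝ (fderiv ℝ G) (t, x) (0, e k) (1, 0) k = _
    rw [← hsymm]
  have hM : ∀ i j, HasDerivAt (fun s => M s i j) (N i j) t := by
    intro i j
    have h1 : HasDerivAt (fun s : ℝ => fderiv ℝ G (s, x)) (fderiv ℝ (fderiv ℝ G) (t, x) (1, 0)) t :=
      HasFDerivAt.comp_hasDerivAt (f := fun s : ℝ => (s, x)) t (hDG (t, x)).hasFDerivAt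
        ((hasDerivAt_id t).prodMk (hasDerivAt_const t x))
    exact (EuclideanSpace.proj (𝕜 := ℝ) i).hasFDerivAt.comp_hasDerivAt t
      ((ContinuousLinearMap.apply ℝ E3 ((0, e j) : ℝ × E3)).hasFDerivAt.comp_hasDerivAt t h1)
  have hMt : ∀ i j, M t i j = (1 : Matrix (Fin 3) (Fin 3) ℝ) i j := by
    intro i j
    have h1 : (fun y => G (t, y)) = fun y => y := by funext y; exact hinv₁ t y
    have h2 := hslice t x
    rw [h1] at h2
    have h3 := h2.unique (hasFDerivAt_id x)
    have h4 := congrArg (fun L : E3 →L[ℝ] E3 => L (e j) i) h3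
    refine Eq.trans (show M t i j = e j i from h4) ?_
    simp [e, Matrix.one_apply]
  let B : Matrix (Fin 3) (Fin 3) ℝ := Matrix.of fun i j => fderiv ℝ (Ψ t) x (e j) i
  have hMB : ∀ s, Matrix.of (M s) = (Matrix.of fun i j : Fin 3 =>
      fderiv ℝ (Φ s) (Ψ t x) (EuclideanSpace.single j 1) i) * B := by
    intro s
    ext i j
    have h1 : HasFDerivAt (fun y => G (s, y))
        ((fderiv ℝ (Φ s) (Ψ t x)).comp (fderiv ℝ (Ψ t) x)) x :=
      (((hΦs s).differentiable (by simp)) (Ψ t x)).hasFDerivAt.comp x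
        ((hΨt.differentiable (by simp)) x).hasFDerivAt
    have h3 := (hslice s x).unique h1
    have h4 := congrArg (fun L : E3 →L[ℝ] E3 => L (e j) i) h3
    refine Eq.trans (show M s i j = fderiv ℝ (Φ s) (Ψ t x) (fderiv ℝ (Ψ t) x (e j)) i from h4) ?_
    have h5 : fderiv ℝ (Ψ t) x (e j) = ∑ k, (fderiv ℝ (Ψ t) x (e j) k) • e k := by
      ext l
      fin_cases l <;> simp [e, Fin.sum_univ_three]
    rw [h5]
    simp [Matrix.mul_apply, B, e, Fin.sum_univ_three, mul_comm]
  have hdM : ∀ s, (Matrix.of (M s)).det = B.det := by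
    intro s
    rw [hMB, Matrix.det_mul, hdet, one_mul]
  have hconst : HasDerivAt (fun s => (Matrix.of (M s)).det) 0 t := by
    simp only [hdM]
    exact hasDerivAt_const t _
  simp only [Matrix.det_fin_three, Matrix.of_apply] at hconst
  have hd := ((((((((hM 0 0).mul (hM 1 1)).mul (hM 2 2)).sub
    (((hM 0 0).mul (hM 1 2)).mul (hM 2 1))).sub
    (((hM 0 1).mul (hM 1 0)).mul (hM 2 2))).add
    (((hM 0 1).mul (hM 1 2)).mul (hM 2 0))).add
    (((hM 0 2).mul (hM 1 0)).mul (hM 2 1))).sub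
    (((hM 0 2).mul (hM 1 1)).mul (hM 2 0)))
  have hfin := hd.unique hconst
  simp [hMt] at hfin
  rw [Fin.sum_univ_three, hpd, hpd, hpd]
  linarith

end
end

section
/- Let Φ : ℝ × ℝ³ → ℝ³ be smooth, suppose that for each t the map Φ(t,·) : ℝ³ → ℝ³ is a bijection whose inverse Ψ(t,·) is such that Ψ : ℝ × ℝ³ → ℝ³ is smooth, define F(t,x) = (D_X Φ)(t, Ψ(t,x)) and G = F − I. Then for all (t,x) and all indices i,j,k: ∂_j G_{ik} − ∂_k G_{ij} = G_{mk} ∂_m G_{ij} − G_{mj} ∂_m G_{ik} (summation over m; all spatial derivatives ∂ are with respect to x). Equivalently, F_{mk} ∂_m F_{ij} = F_{mj} ∂_m F_{ik}. -/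
noncomputable section

/-- for a smooth family of diffeomorphisms `Φ(t,·)` with smooth inverse
`Ψ(t,·)`, the Eulerian deformation gradient `F(t,x) = (D_XΦ)(t,Ψ(t,x))` and `G = F − I`
satisfy the compatibility constraint
`∂_j G_{ik} − ∂_k G_{ij} = G_{mk}∂_m G_{ij} − G_{mj}∂_m G_{ik}`. -/
theorem displacement_gradient_constraint
    (Φ Ψ : ℝ → E3 → E3)
    (hΦ : ContDiff ℝ (⊤ : ℕ∞) (fun z : ℝ × E3 => Φ z.1 z.2))
    (hΨ : ContDiff ℝ (⊤ : ℕ∞) (fun z : ℝ × E3 => Ψ z.1 z.2))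
    (hinv₁ : ∀ t x, Φ t (Ψ t x) = x)
    (hinv₂ : ∀ t X, Ψ t (Φ t X) = X)
    (F : ℝ → E3 → Fin 3 → Fin 3 → ℝ)
    (hF : ∀ t x i j, F t x i j = fderiv ℝ (Φ t) (Ψ t x) (EuclideanSpace.single j 1) i)
    (G : ℝ → E3 → Fin 3 → Fin 3 → ℝ)
    (hG : ∀ t x i j, G t x i j = F t x i j - (if i = j then 1 else 0)) :
    ∀ (t : ℝ) (x : E3) (i j k : Fin 3),
      pd j (fun y => G t y i k) x - pd k (fun y => G t y i j) x
        = ∑ m, (G t x m k * pd m (fun y => G t y i j) x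
            - G t x m j * pd m (fun y => G t y i k) x) := by
  intro t x i j k
  have hφ : ContDiff ℝ (⊤ : ℕ∞) (Φ t) :=
    hΦ.comp (contDiff_const.prodMk contDiff_id : ContDiff ℝ (⊤ : ℕ∞) (fun y : E3 => (t, y)))
  have hψ : ContDiff ℝ (⊤ : ℕ∞) (Ψ t) :=
    hΨ.comp (contDiff_const.prodMk contDiff_id : ContDiff ℝ (⊤ : ℕ∞) (fun y : E3 => (t, y)))
  have hφd : Differentiable ℝ (Φ t) := hφ.differentiable (by simp)
  have hψd : Differentiable ℝ (Ψ t) := hψ.differentiable (by simp)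
  have hDφ : Differentiable ℝ (fderiv ℝ (Φ t)) :=
    (hφ.fderiv_right (m := 1) (WithTop.coe_le_coe.2 (le_top : ((1 + 1 : ℕ∞)) ≤ ⊤))).differentiable (by simp)
  -- derivative of the entries of `G`
  have hder : ∀ (a b : Fin 3) (v : E3), fderiv ℝ (fun y => G t y a b) x v
      = fderiv ℝ (fderiv ℝ (Φ t)) (Ψ t x) (fderiv ℝ (Ψ t) x v) (EuclideanSpace.single b 1) a := by
    intro a b v
    have h1 : HasFDerivAt (fun y => fderiv ℝ (Φ t) (Ψ t y))
        ((fderiv ℝ (fderiv ℝ (Φ t)) (Ψ t x)).comp (fderiv ℝ (Ψ t) x)) x :=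
      (hDφ (Ψ t x)).hasFDerivAt.comp x (hψd x).hasFDerivAt
    have h2 := (((EuclideanSpace.proj a : E3 →L[ℝ] ℝ).comp
      (ContinuousLinearMap.apply ℝ E3 (EuclideanSpace.single b (1:ℝ) : E3))).hasFDerivAt.comp x
        h1).sub_const (if a = b then (1:ℝ) else 0)
    have h3 : (fun y => G t y a b) = fun y => fderiv ℝ (Φ t) (Ψ t y)
        (EuclideanSpace.single b 1) a - (if a = b then (1:ℝ) else 0) := by
      funext y
      rw [hG, hF]
    rw [h3]
    exact DFunLike.congr_fun (HasFDerivAt.fderiv h2) v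
  have hinv : ∀ w : E3, fderiv ℝ (Ψ t) x (fderiv ℝ (Φ t) (Ψ t x) w) = w := by
    intro w
    have h1 : HasFDerivAt (Ψ t) (fderiv ℝ (Ψ t) x) (Φ t (Ψ t x)) := by
      rw [hinv₁]
      exact (hψd x).hasFDerivAt
    have h2 := h1.comp (Ψ t x) (hφd (Ψ t x)).hasFDerivAt
    have h3 : Ψ t ∘ Φ t = id := by
      funext y
      exact hinv₂ t y
    rw [h3] at h2
    have h4 := h2.unique (hasFDerivAt_id (Ψ t x))
    exact DFunLike.congr_fun h4 w
  have hsum : ∀ w : E3, w = ∑ m, w m • (EuclideanSpace.single m (1:ℝ) : E3) := by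
    intro w
    ext n
    fin_cases n <;> simp [Fin.sum_univ_three]
  have key : ∀ a b c : Fin 3, ∑ m, F t x m c * pd m (fun y => G t y a b) x
      = fderiv ℝ (fderiv ℝ (Φ t)) (Ψ t x) (EuclideanSpace.single c 1)
          (EuclideanSpace.single b 1) a := by
    intro a b c
    have h1 := hder a b (fderiv ℝ (Φ t) (Ψ t x) (EuclideanSpace.single c 1))
    rw [hinv] at h1
    rw [← h1]
    conv_rhs => rw [hsum (fderiv ℝ (Φ t) (Ψ t x) (EuclideanSpace.single c 1)), map_sum]
    refine Finset.sum_congr rfl fun m _ => ?_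
    rw [map_smul, hF, smul_eq_mul]
    rfl
  have hsymm : fderiv ℝ (fderiv ℝ (Φ t)) (Ψ t x) (EuclideanSpace.single k 1)
        (EuclideanSpace.single j 1)
      = fderiv ℝ (fderiv ℝ (Φ t)) (Ψ t x) (EuclideanSpace.single j 1)
        (EuclideanSpace.single k 1) :=
    second_derivative_symmetric (f := Φ t) (fun y => (hφd y).hasFDerivAt)
      (hDφ (Ψ t x)).hasFDerivAt _ _
  have hS : ∑ m, F t x m k * pd m (fun y => G t y i j) x
      = ∑ m, F t x m j * pd m (fun y => G t y i k) x := by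
    rw [key, key, hsymm]
  have e : ∀ b c : Fin 3, ∑ m, G t x m c * pd m (fun y => G t y i b) x
      = ∑ m, F t x m c * pd m (fun y => G t y i b) x - pd c (fun y => G t y i b) x := by
    intro b c
    generalize hp : (fun m => pd m (fun y => G t y i b) x) = p
    have hp' : ∀ m, pd m (fun y => G t y i b) x = p m := fun m => by rw [← hp]
    simp only [hp', hG t x, sub_mul, Finset.sum_sub_distrib]
    simp
  rw [Finset.sum_sub_distrib, e, e, hS]
  ring

end
end

section
/- For every f ∈ C_c^∞(ℝ³; ℝ³) there exists a smooth function p : ℝ³ → ℝ with ∇p ∈ L²(ℝ³; ℝ³) such that Δp = ∇·f (i.e., Δp = ∂_i f_i) and ‖∇p‖_{L²(ℝ³)} ≤ ‖f‖_{L²(ℝ³)}. -/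
open MeasureTheory

noncomputable section

open FourierTransform SchwartzMap Real in
/-- Derivative of a Fourier transform along a coordinate. -/
lemma aux_fderiv_fourier (h : E3 → ℂ) (h0 : Integrable h)
    (h1 : Integrable (fun v ↦ ‖v‖ * ‖h v‖)) (j : Fin 3) (x : E3) :
    fderiv ℝ (𝓕 h) x (EuclideanSpace.single j 1)
      = 𝓕 (fun ξ : E3 => (-(2 * π * Complex.I) * (ξ j : ℂ)) * h ξ) x := by
  rw [Real.fderiv_fourier h0 h1, Real.fourier_continuousLinearMap_apply]
  · refine congrArg (fun u : E3 → ℂ => 𝓕 u x) ?_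
    funext v
    have hin : (innerSL ℝ v) (EuclideanSpace.single j (1 : ℝ)) = v j := by
      rw [innerSL_apply_apply, EuclideanSpace.inner_single_right]
      simp
    simp [VectorFourier.fourierSMulRight_apply, hin]
    ring
  · have := (h1.const_mul (2 * π * ‖innerSL ℝ (E := E3)‖))
    refine this.mono' h0.1.fourierSMulRight ?_
    filter_upwards with v
    refine (VectorFourier.norm_fourierSMulRight_le _ _ _).trans ?_
    apply le_of_eq; ring

open FourierTransform SchwartzMap Real in
/-- Plancherel for functions in `L¹ ∩ L²`. -/
lemma aux_plancherel (h : E3 → ℂ) (h0 : Integrable h) (h2 : MemLp h 2 volume) :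
    Integrable (fun x => ‖𝓕 h x‖ ^ 2) ∧ ∫ x, ‖𝓕 h x‖ ^ 2 = ∫ x, ‖h x‖ ^ 2 := by
  have hcont : Continuous (𝓕 h) :=
    VectorFourier.fourierIntegral_continuous Real.continuous_fourierChar
      (by exact continuous_inner) h0
  set G : Lp (α := E3) ℂ 2 volume := h2.toLp h with hG
  let H : Lp (α := E3) ℂ 2 volume := 𝓕 G
  have hae : (fun x => 𝓕 h x) =ᵐ[volume] H := by
    refine ae_eq_of_integral_contDiff_smul_eq hcont.locallyIntegrable
      ((Lp.memLp H).locallyIntegrable (by norm_num)) ?_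
    intro g hg hgs
    have hgs' : HasCompactSupport (fun x => (g x : ℂ)) :=
      hgs.comp_left (g := fun t : ℝ => (t : ℂ)) (by simp)
    let φ : 𝓢(E3, ℂ) := hgs'.toSchwartzMap (Complex.ofRealCLM.contDiff.comp hg)
    have e1 := congrArg (fun T => T φ) (Lp.fourier_toTemperedDistribution_eq G)
    simp only [TemperedDistribution.fourier_apply, Lp.toTemperedDistribution_apply] at e1
    have e2 : ∫ x, (𝓕 φ) x • G x = ∫ x, (𝓕 φ) x • h x := by
      apply integral_congr_ae
      filter_upwards [h2.coeFn_toLp] with x hx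
      rw [hG, hx]
    have e3 : ∫ x, (𝓕 φ) x • h x = ∫ x, φ x • 𝓕 h x := by
      have := VectorFourier.integral_fourierIntegral_smul_eq_flip (L := innerₗ E3)
        (μ := volume) (ν := volume)
        Real.continuous_fourierChar (by exact continuous_inner) φ.integrable h0
      rw [flip_innerₗ] at this
      exact this
    rw [← e2, e1] at e3
    have hφ : ∀ x, φ x = (g x : ℂ) := fun x => rfl
    simp only [hφ] at e3
    simpa using e3.symm
  have hm : MemLp (𝓕 h) 2 volume := (memLp_congr_ae hae).2 (Lp.memLp H)
  have key : ∀ u : Lp (α := E3) ℂ 2 volume, ‖u‖ ^ 2 = ∫ x, ‖u x‖ ^ 2 := by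
    intro u
    have := L2.inner_def (𝕜 := ℂ) u u
    apply Complex.ofRealLI.injective
    simpa [← LinearIsometry.integral_comp_comm, inner_self_eq_norm_sq_to_K] using this
  refine ⟨(memLp_two_iff_integrable_sq_norm hcont.aestronglyMeasurable).1 hm, ?_⟩
  calc ∫ x, ‖𝓕 h x‖ ^ 2 = ∫ x, ‖H x‖ ^ 2 := by
        apply integral_congr_ae
        filter_upwards [hae] with x hx
        rw [hx]
    _ = ‖G‖ ^ 2 := by rw [← key H, Lp.norm_fourier_eq]
    _ = ∫ x, ‖h x‖ ^ 2 := by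
        rw [key]
        apply integral_congr_ae
        filter_upwards [h2.coeFn_toLp] with x hx
        rw [hG, hx]

open SchwartzMap in
/-- Integrability of `‖ξ‖⁻¹ F` for Schwartz `F` on `ℝ³`. -/
lemma aux_integrable_inv (F : 𝓢(E3, ℂ)) : Integrable (fun x : E3 => ‖x‖⁻¹ * ‖F x‖) := by
  obtain ⟨C, _, hC⟩ := F.decay 0 0
  have hmeas : AEStronglyMeasurable (fun x : E3 => ‖x‖⁻¹ * ‖F x‖) := by
    have := F.continuous.measurable
    exact (by fun_prop : Measurable (fun x : E3 => ‖x‖⁻¹ * ‖F x‖)).aestronglyMeasurable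
  rw [← integrableOn_univ, ← Set.union_compl_self (Metric.ball (0 : E3) 1)]
  refine IntegrableOn.union ?_ ?_
  · refine integrableOn_ball_of_norm_le_rpow (C := C) (α := 1) (by simp) (by simp) ?_ hmeas
    filter_upwards with x
    have := hC x
    simp only [pow_zero, one_mul, norm_iteratedFDeriv_zero] at this
    rw [Real.rpow_neg_one, Real.norm_of_nonneg (by positivity), mul_comm]
    gcongr
  · refine Integrable.mono' F.integrable.norm.integrableOn hmeas.restrict ?_
    filter_upwards [ae_restrict_mem Metric.isOpen_ball.measurableSet.compl] with x hx
    have hx1 : 1 ≤ ‖x‖ := by simpa using hx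
    rw [Real.norm_of_nonneg (by positivity)]
    exact mul_le_of_le_one_left (norm_nonneg _) (inv_le_one_of_one_le₀ hx1)

/-- Cauchy-Schwarz for the symbol. -/
lemma aux_cs (ξ : E3) (a : Fin 3 → ℂ) :
    ‖∑ i, (ξ i : ℂ) * a i‖ ^ 2 ≤ ‖ξ‖ ^ 2 * ∑ i, ‖a i‖ ^ 2 := by
  have h1 : ‖∑ i, (ξ i : ℂ) * a i‖ ≤ ∑ i, |ξ i| * ‖a i‖ := by
    refine (norm_sum_le _ _).trans (le_of_eq ?_)
    simp
  have h2 := Finset.sum_mul_sq_le_sq_mul_sq Finset.univ (fun i => |ξ i|) (fun i => ‖a i‖)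
  rw [EuclideanSpace.real_norm_sq_eq]
  simp only [sq_abs] at h2
  exact (pow_le_pow_left₀ (norm_nonneg _) h1 2).trans h2

/-- The Fourier symbol of the pressure. -/
def aux_m (a : Fin 3 → E3 → ℂ) (ξ : E3) : ℂ :=
  (Complex.I / (2 * Real.pi)) * (((‖ξ‖ ^ 2)⁻¹ : ℝ) : ℂ) * ∑ i, (ξ i : ℂ) * a i ξ

/-- The Fourier symbol of the components of the pressure gradient. -/
def aux_g (a : Fin 3 → E3 → ℂ) (j : Fin 3) (ξ : E3) : ℂ :=
  (-(2 * Real.pi * Complex.I) * (ξ j : ℂ)) * aux_m a ξ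

lemma aux_norm_m (a : Fin 3 → E3 → ℂ) (ξ : E3) :
    ‖aux_m a ξ‖ = (2 * Real.pi)⁻¹ * (‖ξ‖ ^ 2)⁻¹ * ‖∑ i, (ξ i : ℂ) * a i ξ‖ := by
  simp [aux_m, abs_of_pos Real.pi_pos]

lemma aux_m_le (a : Fin 3 → E3 → ℂ) (ξ : E3) :
    ‖aux_m a ξ‖ ≤ ∑ i, ‖ξ‖⁻¹ * ‖a i ξ‖ := by
  have h1 : ‖∑ i, (ξ i : ℂ) * a i ξ‖ ≤ ‖ξ‖ * ∑ i, ‖a i ξ‖ := by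
    rw [Finset.mul_sum]
    refine (norm_sum_le _ _).trans (Finset.sum_le_sum fun i _ => ?_)
    rw [norm_mul, Complex.norm_real]
    gcongr
    exact PiLp.norm_apply_le ξ i
  have h2 : (2 * Real.pi)⁻¹ ≤ 1 := by
    apply inv_le_one_of_one_le₀
    linarith [Real.pi_gt_three]
  rw [aux_norm_m, ← Finset.mul_sum]
  rcases eq_or_ne ‖ξ‖ 0 with h0 | h0
  · simp [h0]
  calc (2 * Real.pi)⁻¹ * (‖ξ‖ ^ 2)⁻¹ * ‖∑ i, (ξ i : ℂ) * a i ξ‖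
      ≤ 1 * (‖ξ‖ ^ 2)⁻¹ * (‖ξ‖ * ∑ i, ‖a i ξ‖) := by gcongr
    _ = ‖ξ‖⁻¹ * ∑ i, ‖a i ξ‖ := by field_simp

lemma aux_g_norm (a : Fin 3 → E3 → ℂ) (j : Fin 3) (ξ : E3) :
    ‖aux_g a j ξ‖ = 2 * Real.pi * |ξ j| * ‖aux_m a ξ‖ := by
  simp [aux_g, abs_of_pos Real.pi_pos]

lemma aux_g_sq (a : Fin 3 → E3 → ℂ) (ξ : E3) :
    ∑ j, ‖aux_g a j ξ‖ ^ 2 ≤ ∑ i, ‖a i ξ‖ ^ 2 := by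
  have hp := Real.pi_pos
  have h : ∑ j, ‖aux_g a j ξ‖ ^ 2 = (2 * Real.pi * ‖aux_m a ξ‖) ^ 2 * ‖ξ‖ ^ 2 := by
    rw [EuclideanSpace.real_norm_sq_eq, Finset.mul_sum]
    refine Finset.sum_congr rfl fun j _ => ?_
    rw [aux_g_norm, ← sq_abs (ξ j)]
    ring
  rw [h, aux_norm_m]
  rcases eq_or_ne ‖ξ‖ 0 with h0 | h0
  · rw [h0]; simp; positivity
  have h0' : 0 < ‖ξ‖ := lt_of_le_of_ne (norm_nonneg _) h0.symm
  have := aux_cs ξ (fun i => a i ξ)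
  calc _ = ‖∑ i, (ξ i : ℂ) * a i ξ‖ ^ 2 / ‖ξ‖ ^ 2 := by field_simp
    _ ≤ _ := by
      rw [div_le_iff₀ (by positivity)]
      linarith

lemma aux_g_div (a : Fin 3 → E3 → ℂ) (ξ : E3) :
    ∑ j, (-(2 * Real.pi * Complex.I) * (ξ j : ℂ)) * aux_g a j ξ
      = ∑ j, (-(2 * Real.pi * Complex.I) * (ξ j : ℂ)) * a j ξ := by
  have hp : (Real.pi : ℂ) ≠ 0 := by exact_mod_cast Real.pi_ne_zero
  rcases eq_or_ne ξ 0 with h0 | h0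
  · simp [h0]
  have hn : (‖ξ‖ : ℂ) ≠ 0 := by exact_mod_cast norm_ne_zero_iff.2 h0
  have hs : ((‖ξ‖ : ℂ)) ^ 2 = ∑ j, (ξ j : ℂ) ^ 2 := by
    exact_mod_cast congrArg (fun t : ℝ => (t : ℂ)) (EuclideanSpace.real_norm_sq_eq ξ)
  have e1 : ∑ j, (-(2 * Real.pi * Complex.I) * (ξ j : ℂ)) * aux_g a j ξ
      = (-(2 * Real.pi * Complex.I)) ^ 2 * aux_m a ξ * (‖ξ‖ : ℂ) ^ 2 := by
    rw [hs, Finset.mul_sum]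
    refine Finset.sum_congr rfl fun j _ => ?_
    rw [aux_g]; ring
  have e2 : ∑ j, (-(2 * Real.pi * Complex.I) * (ξ j : ℂ)) * a j ξ
      = (-(2 * Real.pi * Complex.I)) * ∑ j, (ξ j : ℂ) * a j ξ := by
    rw [Finset.mul_sum]
    exact Finset.sum_congr rfl fun j _ => by ring
  rw [e1, e2, aux_m]
  push_cast
  field_simp
  rw [Complex.I_sq]
  ring

lemma aux_m_meas (a : Fin 3 → E3 → ℂ) (ha : ∀ i, Continuous (a i)) : Measurable (aux_m a) := by
  have := fun i => (ha i).measurable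
  unfold aux_m
  fun_prop

lemma aux_g_meas (a : Fin 3 → E3 → ℂ) (ha : ∀ i, Continuous (a i)) (j : Fin 3) :
    Measurable (aux_g a j) := by
  have := aux_m_meas a ha
  unfold aux_g
  fun_prop

open SchwartzMap in
lemma aux_m_int (F : Fin 3 → 𝓢(E3, ℂ)) (n : ℕ) :
    Integrable (fun ξ => ‖ξ‖ ^ n * ‖aux_m (fun i => F i) ξ‖) := by
  have hm := aux_m_meas (fun i => F i) (fun i => (F i).continuous)
  have hI : ∀ i, Integrable (fun ξ : E3 => ‖ξ‖ ^ n * (‖ξ‖⁻¹ * ‖F i ξ‖)) := by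
    intro i
    cases n with
    | zero => simpa using aux_integrable_inv (F i)
    | succ k =>
      have := (F i).continuous.measurable
      refine ((F i).integrable_pow_mul volume k).mono'
        (by fun_prop : Measurable _).aestronglyMeasurable ?_
      filter_upwards with ξ
      rw [Real.norm_of_nonneg (by positivity)]
      rcases eq_or_ne ‖ξ‖ 0 with h0 | h0
      · simp only [h0, inv_zero, zero_mul, mul_zero]; positivity
      · apply le_of_eq; field_simp; ring
  refine (integrable_finsetSum Finset.univ fun i _ => hI i).mono'
    (by fun_prop : Measurable _).aestronglyMeasurable ?_
  filter_upwards with ξ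
  rw [Real.norm_of_nonneg (by positivity), ← Finset.mul_sum]
  gcongr
  exact aux_m_le _ _

open SchwartzMap in
lemma aux_g_int (F : Fin 3 → 𝓢(E3, ℂ)) (j : Fin 3) (n : ℕ) :
    Integrable (fun ξ => ‖ξ‖ ^ n * ‖aux_g (fun i => F i) j ξ‖) := by
  have hm := aux_g_meas (fun i => F i) (fun i => (F i).continuous) j
  refine ((aux_m_int F (n + 1)).const_mul (2 * Real.pi)).mono'
    (by fun_prop : Measurable _).aestronglyMeasurable ?_
  filter_upwards with ξ
  have hp := Real.pi_pos
  rw [Real.norm_of_nonneg (by positivity), aux_g_norm]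
  have : |ξ j| ≤ ‖ξ‖ := PiLp.norm_apply_le ξ j
  calc ‖ξ‖ ^ n * (2 * Real.pi * |ξ j| * ‖aux_m (fun i => F i) ξ‖)
      ≤ ‖ξ‖ ^ n * (2 * Real.pi * ‖ξ‖ * ‖aux_m (fun i => F i) ξ‖) := by gcongr
    _ = _ := by ring

open SchwartzMap in
lemma aux_F_sq (F : 𝓢(E3, ℂ)) : Integrable (fun ξ => ‖F ξ‖ ^ 2) :=
  (memLp_two_iff_integrable_sq_norm F.continuous.aestronglyMeasurable).1 (F.memLp 2 volume)

open SchwartzMap in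
lemma aux_g_memLp (F : Fin 3 → 𝓢(E3, ℂ)) (j : Fin 3) :
    MemLp (aux_g (fun i => F i) j) 2 volume := by
  have hm := aux_g_meas (fun i => F i) (fun i => (F i).continuous) j
  rw [memLp_two_iff_integrable_sq_norm hm.aestronglyMeasurable]
  refine (integrable_finsetSum Finset.univ fun i _ => aux_F_sq (F i)).mono'
    (by fun_prop : Measurable _).aestronglyMeasurable ?_
  filter_upwards with ξ
  rw [Real.norm_of_nonneg (by positivity)]
  refine le_trans ?_ (aux_g_sq (fun i => F i) ξ)
  exact Finset.single_le_sum (f := fun j => ‖aux_g (fun i => F i) j ξ‖ ^ 2)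
    (fun _ _ => by positivity) (Finset.mem_univ j)

lemma aux_pd_re (P : E3 → ℂ) (hP : Differentiable ℝ P) (j : Fin 3) (x : E3) :
    pd j (fun y => (P y).re) x = (fderiv ℝ P x (EuclideanSpace.single j 1)).re := by
  have := (Complex.reCLM.hasFDerivAt.comp x (hP x).hasFDerivAt).fderiv
  unfold pd
  change fderiv ℝ (Complex.reCLM ∘ P) x _ = _
  rw [this]
  rfl

open FourierTransform in
lemma aux_pd_fourier (h : E3 → ℂ) (hm : Measurable h)
    (hn : ∀ n : ℕ, Integrable (fun ξ => ‖ξ‖ ^ n * ‖h ξ‖)) (j : Fin 3) (x : E3) :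
    pd j (fun y => (𝓕 h y).re) x
      = (𝓕 (fun ξ : E3 => (-(2 * Real.pi * Complex.I) * (ξ j : ℂ)) * h ξ) x).re := by
  have h0 : Integrable h := by
    rw [← integrable_norm_iff hm.aestronglyMeasurable]
    simpa using hn 0
  have h1 : Integrable (fun v ↦ ‖v‖ * ‖h v‖) := by simpa using hn 1
  rw [aux_pd_re _ (Real.differentiable_fourier h0 h1), aux_fderiv_fourier h h0 h1]

open FourierTransform in
lemma aux_int (h : E3 → ℂ) (hm : Measurable h)
    (hn : ∀ n : ℕ, Integrable (fun ξ => ‖ξ‖ ^ n * ‖h ξ‖)) (j : Fin 3) :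
    Integrable (fun ξ : E3 => (-(2 * Real.pi * Complex.I) * (ξ j : ℂ)) * h ξ) := by
  refine ((hn 1).const_mul (2 * Real.pi)).mono'
    (by fun_prop : Measurable _).aestronglyMeasurable ?_
  filter_upwards with ξ
  have hp := Real.pi_pos
  have : |ξ j| ≤ ‖ξ‖ := PiLp.norm_apply_le ξ j
  simp [abs_of_pos hp]
  rw [mul_assoc]
  gcongr

open FourierTransform in
lemma aux_fourier_sum (h : Fin 3 → E3 → ℂ) (hI : ∀ j, Integrable (h j)) (x : E3) :
    ∑ j, (𝓕 (h j) x).re = (𝓕 (fun ξ => ∑ j, h j ξ) x).re := by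
  rw [← Complex.re_sum]
  congr 1
  simp only [Real.fourier_eq]
  rw [← integral_finsetSum]
  · simp [Finset.smul_sum]
  · intro j _
    exact (Real.fourierIntegral_convergent_iff x).2 (hI j)

/-- for every `f ∈ C_c^∞(ℝ³;ℝ³)` there is a smooth `p : ℝ³ → ℝ` with
`∇p ∈ L²`, `Δp = ∇·f`, and `‖∇p‖_{L²} ≤ ‖f‖_{L²}`. -/
theorem pressure_gradient_L2_bound
    (f : E3 → Fin 3 → ℝ) (hf : ContDiff ℝ (⊤ : ℕ∞) f) (hsupp : HasCompactSupport f) :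
    ∃ p : E3 → ℝ, ContDiff ℝ (⊤ : ℕ∞) p ∧
      Integrable (fun x : E3 => ∑ i, (pd i p x) ^ 2) ∧
      (∀ x : E3, ∑ i, pd i (pd i p) x = ∑ i, pd i (fun y => f y i) x) ∧
      (∫ x : E3, ∑ i, (pd i p x) ^ 2) ^ ((1 : ℝ) / 2)
        ≤ (∫ x : E3, ∑ i, (f x i) ^ 2) ^ ((1 : ℝ) / 2) := by
  open FourierTransform SchwartzMap in
  have hs : ∀ i, HasCompactSupport (fun x => (f x i : ℂ)) := fun i =>
    hsupp.comp_left (g := fun t : Fin 3 → ℝ => (t i : ℂ)) (by simp)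
  have hd : ∀ i, ContDiff ℝ (⊤ : ℕ∞) (fun x => (f x i : ℂ)) := fun i =>
    Complex.ofRealCLM.contDiff.comp (contDiff_pi.1 hf i)
  let φ : Fin 3 → 𝓢(E3, ℂ) := fun i => (hs i).toSchwartzMap (hd i)
  have hφ : ∀ i x, φ i x = (f x i : ℂ) := fun i x => rfl
  let F : Fin 3 → 𝓢(E3, ℂ) := fun i => 𝓕⁻ (φ i)
  have hFφ : ∀ i, 𝓕 (F i) = φ i := fun i => fourier_fourierInv_eq (φ i)
  have hF : ∀ i x, 𝓕 (F i : E3 → ℂ) x = (f x i : ℂ) := by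
    intro i x
    rw [← SchwartzMap.fourier_coe, hFφ, hφ]
  set m := aux_m (fun i => F i) with hmdef
  set g := aux_g (fun i => F i) with hgdef
  have hFc : ∀ i, Continuous (F i) := fun i => (F i).continuous
  have hmm : Measurable m := aux_m_meas _ hFc
  have hgm : ∀ j, Measurable (g j) := aux_g_meas _ hFc
  have hmi := aux_m_int F
  have hgi := aux_g_int F
  have hg0 : ∀ j, Integrable (g j) := by
    intro j
    rw [← integrable_norm_iff (hgm j).aestronglyMeasurable]
    simpa using hgi j 0
  have hpd : ∀ j, pd j (fun y => (𝓕 m y).re) = fun x => (𝓕 (g j) x).re := by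
    intro j
    funext x
    exact aux_pd_fourier m hmm hmi j x
  have hpl := fun j => aux_plancherel (g j) (hg0 j) (aux_g_memLp F j)
  have hgc : ∀ j, Continuous (𝓕 (g j)) := fun j =>
    VectorFourier.fourierIntegral_continuous Real.continuous_fourierChar
      (by exact continuous_inner) (hg0 j)
  have hle : ∀ x, ∑ j, ((𝓕 (g j) x).re) ^ 2 ≤ ∑ j, ‖𝓕 (g j) x‖ ^ 2 := by
    intro x
    refine Finset.sum_le_sum fun j _ => ?_
    rw [← sq_abs]
    gcongr
    exact Complex.abs_re_le_norm _
  have hsumI : Integrable (fun x => ∑ j, ‖𝓕 (g j) x‖ ^ 2) :=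
    integrable_finsetSum _ fun j _ => (hpl j).1
  have hint : Integrable (fun x => ∑ j, ((𝓕 (g j) x).re) ^ 2) := by
    refine hsumI.mono' ?_ ?_
    · refine Continuous.aestronglyMeasurable ?_
      exact continuous_finsetSum _ fun j _ => (Complex.continuous_re.comp (hgc j)).pow 2
    · filter_upwards with x
      rw [Real.norm_of_nonneg (by positivity)]
      exact hle x
  refine ⟨fun y => (𝓕 m y).re, ?_, ?_, ?_, ?_⟩
  · exact Complex.reCLM.contDiff.comp (Real.contDiff_fourier (N := ⊤) fun n _ => hmi n)
  · simpa only [hpd] using hint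
  · intro x
    have e1 : ∀ j, pd j (fun y => f y j) x
        = (𝓕 (fun ξ : E3 => (-(2 * Real.pi * Complex.I) * (ξ j : ℂ)) * F j ξ) x).re := by
      intro j
      rw [← aux_pd_fourier (F j) (hFc j).measurable (fun n => (F j).integrable_pow_mul volume n)]
      congr 1
      funext y
      rw [hF, Complex.ofReal_re]
    simp only [hpd, e1]
    simp only [fun j => aux_pd_fourier (g j) (hgm j) (hgi j) j x]
    rw [aux_fourier_sum _ (fun j => aux_int (g j) (hgm j) (hgi j) j),
      aux_fourier_sum _ (fun j => aux_int (F j) (hFc j).measurable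
        (fun n => (F j).integrable_pow_mul volume n) j)]
    refine congrArg (fun u : E3 → ℂ => (𝓕 u x).re) ?_
    funext ξ
    exact aux_g_div (fun i => F i) ξ
  · simp only [hpd]
    refine Real.rpow_le_rpow (integral_nonneg fun x => by positivity) ?_ (by norm_num)
    calc ∫ x, ∑ j, ((𝓕 (g j) x).re) ^ 2 ≤ ∫ x, ∑ j, ‖𝓕 (g j) x‖ ^ 2 :=
          integral_mono hint hsumI hle
      _ = ∫ x, ∑ j, ‖g j x‖ ^ 2 := by
          have h2 : ∀ j, Integrable (fun x => ‖g j x‖ ^ 2) := fun j =>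
            (memLp_two_iff_integrable_sq_norm (hgm j).aestronglyMeasurable).1 (aux_g_memLp F j)
          rw [integral_finsetSum _ fun j _ => (hpl j).1, integral_finsetSum _ fun j _ => h2 j]
          exact Finset.sum_congr rfl fun j _ => (hpl j).2
      _ ≤ ∫ x, ∑ j, ‖F j x‖ ^ 2 := by
          refine integral_mono_of_nonneg (.of_forall fun x => by positivity)
            (integrable_finsetSum _ fun j _ => aux_F_sq (F j))
            (.of_forall fun x => aux_g_sq (fun i => F i) x)
      _ = ∫ x, ∑ j, ‖φ j x‖ ^ 2 := by
          rw [integral_finsetSum _ fun j _ => aux_F_sq (F j),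
            integral_finsetSum _ fun j _ => aux_F_sq (φ j)]
          refine Finset.sum_congr rfl fun j _ => ?_
          rw [← SchwartzMap.integral_norm_sq_fourier (F j), hFφ]
      _ = ∫ x, ∑ i, (f x i) ^ 2 := by
          simp [hφ]

end
end
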